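/- arXiv:math/0611742 — 2 statements merged into one kernel-verified Lean document; each statement's English description precedes it below -/
import Mathlib

section
/- Let (A,m) be a multiarrangement in V = K^ℓ, let T = ∩_{H∈A} H be the intersection of all hyperplanes of A, and let C_p denote the coefficient of t^p in the Poincaré polynomial π((A,m),t). Then for every p with 0 ≤ p ≤ r(T), C_p = Σ_{Y ∈ L_p} C_p(Y). -/
/-!
The identity is a local-to-global statement, obtained by Möbius inversion over the subsets `B` of
the arrangement. For fixed multiplicities, `ψ(A,m;t,q)` is the sum over all `B ⊆ A` of a local
contribution, namely `±` the alternating sum over `C ⊆ B` of the `ψ(C,m;t,q)` (`psi_eq_sum`).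

The main point (`cubePsi_monomial`) is that at `q = 1` the contribution of `B` is a multiple of the
single monomial `t ^ dim (⋂ B)`. If a nonzero vector lies in `⋂ B`, a linear change of coordinates
makes all forms of `B` independent of one variable; dropping that variable divides the contribution
by `-t`, since `D^(p+1)` modulo that variable is `D^(p+1) ⊕ D^p` of the reduced family
(`map_res`, `cubePsi_jW`). This reduces to `⋂ B = 0`. Then the alternating sum of the Hilbert
functions of the `D^p(C,m)`, `C ⊆ B`, is the Euler characteristic of a cube-shaped complex of
inclusions. Multiplication by `α_H ^ m(H)` carries `D^p(C,m)` into `D^p(C ∪ {H},m)`, which makes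
it null-homotopic on the complex, so the homology is killed by the ideal of the `α_H ^ m(H)`, which
contains a power of the irrelevant ideal. As the homology is finitely generated, the Euler
characteristic vanishes in large degrees (`cubeDim_eventually_zero`). The contribution is thus
polynomial in `q`, and substituting `q = 1` in `(t (q - 1) - 1) ^ p` leaves only a constant.

Consequently the coefficient of `t ^ (ℓ - p)` in `ψ(A,m;t,1)` is a sum over the `B` whose
intersection has rank `p`. Grouping these by `Y = ⋂ B` gives the theorem, because the subsets with
intersection `Y` are subsets of `A_Y`, and the other subsets of `A_Y` do not contribute to `C_p(Y)`
(`sum_flats`).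

Dimension counts are carried out in a model of `D^p` by alternating forms on the space of linear
forms (`AltF`, `polyDer`), which is compared with multiderivations in `finrank_DpGraded`.
-/

open MvPolynomial

noncomputable section

/-- The linear form (degree-one polynomial) associated to a linear functional on `K^ℓ`. -/
def formPoly {K : Type*} [Field K] {ℓ : ℕ} (φ : Module.Dual K (Fin ℓ → K)) :
    MvPolynomial (Fin ℓ) K :=
  ∑ i : Fin ℓ, MvPolynomial.C (φ (Pi.single i 1)) * MvPolynomial.X i

/-- A multiarrangement of hyperplanes in `K^ℓ`: a finite set of (pairwise distinct)
hyperplanes, recorded by nonzero defining linear functionals with pairwise distinct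
kernels, together with a positive multiplicity attached to each hyperplane. -/
structure MultiArr (K : Type*) [Field K] (ℓ : ℕ) where
  duals : Finset (Module.Dual K (Fin ℓ → K))
  ne_zero : ∀ φ ∈ duals, φ ≠ 0
  distinct_ker : ∀ φ ∈ duals, ∀ ψ ∈ duals, φ ≠ ψ → LinearMap.ker φ ≠ LinearMap.ker ψ
  mult : Module.Dual K (Fin ℓ → K) → ℕ
  mult_pos : ∀ φ ∈ duals, 0 < mult φ

variable {K : Type*} [Field K] {ℓ : ℕ}

/-- `Der^p(S)`-condition: an alternating `p`-multilinear map is a `K`-derivation in each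
variable. -/
def IsMultiDer {p : ℕ}
    (θ : (MvPolynomial (Fin ℓ) K) [⋀^Fin p]→ₗ[K] (MvPolynomial (Fin ℓ) K)) : Prop :=
  ∀ (i : Fin p) (v : Fin p → MvPolynomial (Fin ℓ) K) (f g : MvPolynomial (Fin ℓ) K),
    θ (Function.update v i (f * g)) =
      f * θ (Function.update v i g) + g * θ (Function.update v i f)

/-- The module of `p`-derivations `D^p(𝒜,m)` of a multiarrangement, as a submodule of the
alternating `p`-multilinear maps (for `p = 0` this is all of `S ≅ Der^0(S)`). -/
def Dp (A : MultiArr K ℓ) (p : ℕ) :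
    Submodule (MvPolynomial (Fin ℓ) K)
      ((MvPolynomial (Fin ℓ) K) [⋀^Fin p]→ₗ[K] (MvPolynomial (Fin ℓ) K)) where
  carrier := {θ | IsMultiDer θ ∧ ∀ φ ∈ A.duals, ∀ v : Fin p → MvPolynomial (Fin ℓ) K,
    ∀ i : Fin p, v i = formPoly φ → θ v ∈ Ideal.span {formPoly φ ^ A.mult φ}}
  add_mem' := by
    rintro θ η ⟨hθ, hθ'⟩ ⟨hη, hη'⟩
    refine ⟨fun i v f g => ?_, fun φ hφ v i hv => ?_⟩
    · simp only [AlternatingMap.add_apply, hθ i v f g, hη i v f g]; ring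
    · simpa using add_mem (hθ' φ hφ v i hv) (hη' φ hφ v i hv)
  zero_mem' := by
    refine ⟨fun i v f g => by simp, fun φ hφ v i hv => by simp⟩
  smul_mem' := by
    rintro c θ ⟨hθ, hθ'⟩
    refine ⟨fun i v f g => ?_, fun φ hφ v i hv => ?_⟩
    · simp only [AlternatingMap.smul_apply, smul_eq_mul, hθ i v f g]; ring
    · simpa using Ideal.mul_mem_left _ c (hθ' φ hφ v i hv)

attribute [local instance] Classical.propDecidable

/-- The subarrangement `(𝒜_X, m_X)`, consisting of the hyperplanes of `𝒜` containing `X`,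
with the restricted multiplicity. -/
def restrictArr (A : MultiArr K ℓ) (X : Submodule K (Fin ℓ → K)) : MultiArr K ℓ where
  duals := A.duals.filter (fun φ => X ≤ LinearMap.ker φ)
  ne_zero := fun φ hφ => A.ne_zero φ (Finset.mem_filter.mp hφ).1
  distinct_ker := fun φ hφ ψ hψ =>
    A.distinct_ker φ (Finset.mem_filter.mp hφ).1 ψ (Finset.mem_filter.mp hψ).1
  mult := A.mult
  mult_pos := fun φ hφ => A.mult_pos φ (Finset.mem_filter.mp hφ).1

/-- The intersection lattice `L(𝒜)`: all intersections of subsets of `𝒜`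
(with `V` itself as the empty intersection). -/
def LSet (A : MultiArr K ℓ) : Finset (Submodule K (Fin ℓ → K)) :=
  A.duals.powerset.image fun B => ⨅ φ ∈ B, LinearMap.ker φ

/-- The rank `r(X) = codim_V X` of a subspace `X ⊆ V = K^ℓ`. -/
def rk {K : Type*} [Field K] {ℓ : ℕ} (X : Submodule K (Fin ℓ → K)) : ℕ :=
  ℓ - Module.finrank K X

/-- A `p`-derivation is homogeneous of (polynomial) degree `d` if all the values
`θ(x_{i_1},…,x_{i_p})` are homogeneous polynomials of degree `d`. -/
def AltHomog {p : ℕ}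
    (θ : (MvPolynomial (Fin ℓ) K) [⋀^Fin p]→ₗ[K] (MvPolynomial (Fin ℓ) K)) (d : ℕ) : Prop :=
  ∀ v : Fin p → Fin ℓ, (θ fun j => MvPolynomial.X (v j)).IsHomogeneous d

/-- The degree-`d` graded component of `D^p(𝒜,m)`, as a `K`-subspace. -/
def DpGraded (A : MultiArr K ℓ) (p d : ℕ) :
    Submodule K ((MvPolynomial (Fin ℓ) K) [⋀^Fin p]→ₗ[K] (MvPolynomial (Fin ℓ) K)) where
  carrier := {θ | θ ∈ Dp A p ∧ AltHomog θ d}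
  add_mem' := fun ha hb =>
    ⟨add_mem ha.1 hb.1, fun v => by
      simpa using (ha.2 v).add (hb.2 v)⟩
  zero_mem' := ⟨zero_mem _, fun v => by
    simpa using MvPolynomial.isHomogeneous_zero _ _ d⟩
  smul_mem' := fun c θ hθ => by
    refine ⟨?_, fun v => ?_⟩
    · have : c • θ = (MvPolynomial.C c : MvPolynomial (Fin ℓ) K) • θ := by
        ext v
        simp [MvPolynomial.smul_eq_C_mul]
      rw [this]
      exact Submodule.smul_mem _ _ hθ.1
    · have : (c • θ) (fun j => MvPolynomial.X (v j)) =
        MvPolynomial.C c * θ (fun j => MvPolynomial.X (v j)) := by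
        simp [MvPolynomial.smul_eq_C_mul]
      rw [this]
      simpa using (MvPolynomial.isHomogeneous_C _ c).mul (hθ.2 v)

/-- The Hilbert series `H(D^p(𝒜,m), q) = Σ_d dim_K D^p(𝒜,m)_d qᵈ`. -/
def hilb (A : MultiArr K ℓ) (p : ℕ) : PowerSeries ℤ :=
  PowerSeries.mk fun d => (Module.finrank K (DpGraded A p d) : ℤ)

/-- `ψ(𝒜,m;t,q) = Σ_{p=0}^{ℓ} H(D^p(𝒜,m),q)·(t(q−1)−1)^p`, as a polynomial in `t` with
power-series (in `q`) coefficients. -/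
def psi (A : MultiArr K ℓ) : Polynomial (PowerSeries ℤ) :=
  ∑ p ∈ Finset.range (ℓ + 1), Polynomial.C (hilb A p) *
    (Polynomial.C ((PowerSeries.X : PowerSeries ℤ) - 1) * Polynomial.X - 1) ^ p

/-- The coefficient of `t^k` in `ψ(𝒜,m;t,q)`, expressed as a polynomial in `q`
(this is possible by Theorem `chithm`; junk value `0` otherwise). -/
def psiQCoeff (A : MultiArr K ℓ) (k : ℕ) : Polynomial ℤ :=
  if h : ∃ f : Polynomial ℤ, Polynomial.coeToPowerSeries.ringHom f = (psi A).coeff k then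
    h.choose else 0

/-- The coefficient of `t^k` in `ψ(𝒜,m;t,1)`. -/
def psiAtOne (A : MultiArr K ℓ) (k : ℕ) : ℤ := (psiQCoeff A k).eval 1

/-- `ψ(𝒜,m;t,1)` as a polynomial in `t`. -/
def psiT1Poly (A : MultiArr K ℓ) : Polynomial ℤ :=
  ∑ k ∈ Finset.range (ℓ + 1), Polynomial.C (psiAtOne A k) * Polynomial.X ^ k

/-- The characteristic polynomial `χ((𝒜,m),t) = (−1)^ℓ ψ(𝒜,m;t,1)`. -/
def charPoly (A : MultiArr K ℓ) : Polynomial ℤ := (-1 : ℤ) ^ ℓ • psiT1Poly A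

/-- `C_p`, the coefficient of `t^p` in the Poincaré polynomial
`π((𝒜,m),t) = (−t)^ℓ χ((𝒜,m),−t^{−1})`. -/
def CpCoeff (A : MultiArr K ℓ) (p : ℕ) : ℤ := (-1 : ℤ) ^ (ℓ - p) * psiAtOne A (ℓ - p)

/-- The Poincaré polynomial `π((𝒜,m),t) = (−t)^ℓ χ((𝒜,m),−t^{−1})`. -/
def poinPoly (A : MultiArr K ℓ) : Polynomial ℤ :=
  ∑ p ∈ Finset.range (ℓ + 1), Polynomial.C (CpCoeff A p) * Polynomial.X ^ p

/-! ### The cube complex -/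

section Cube

variable {ι R F : Type*} [LinearOrder ι] [CommRing R] [AddCommGroup F] [Module R F]

/-- The incidence sign of the cube: `-1` to the number of elements of `B` below `i`. -/
def cubeSign (i : ι) (B : Finset ι) : ℤ := (-1) ^ (B.filter (· < i)).card

lemma cubeSign_sq (i : ι) (B : Finset ι) : cubeSign i B * cubeSign i B = 1 := by
  unfold cubeSign
  rw [← pow_add, Even.neg_one_pow ⟨_, rfl⟩]

lemma cubeSign_insert {i j : ι} {B : Finset ι} (hi : i ∉ B) :
    cubeSign j (insert i B) = if i < j then - cubeSign j B else cubeSign j B := by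
  unfold cubeSign
  rw [Finset.filter_insert]
  split_ifs with h
  · rw [Finset.card_insert_of_notMem (by simp [hi]), pow_succ]; ring
  · rfl

lemma cubeSign_anti {i j : ι} {B : Finset ι} (hi : i ∉ B) (hj : j ∉ B) (hij : i ≠ j) :
    cubeSign i B * cubeSign j (insert i B) = - (cubeSign j B * cubeSign i (insert j B)) := by
  rw [cubeSign_insert hi, cubeSign_insert hj]
  rcases lt_or_gt_of_ne hij with h | h
  · rw [if_pos h, if_neg h.asymm]; ring
  · rw [if_neg h.asymm, if_pos h]; ring

variable [Fintype ι]

variable (R F) in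
/-- The differential of the cube complex with constant coefficients `F`, on the total space of all
families indexed by the subsets of `ι`. -/
def cubeD : (Finset ι → F) →ₗ[R] (Finset ι → F) where
  toFun c B := ∑ i ∈ Bᶜ, cubeSign i B • c (insert i B)
  map_add' c c' := by
    ext B; simp [Finset.sum_add_distrib]
  map_smul' r c := by
    ext B; simp [Finset.smul_sum, smul_comm r]

lemma cubeD_apply (c : Finset ι → F) (B : Finset ι) :
    cubeD R F c B = ∑ i ∈ Bᶜ, cubeSign i B • c (insert i B) := rfl

lemma cubeD_cubeD (c : Finset ι → F) : cubeD R F (cubeD R F c) = 0 := by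
  ext B
  simp only [cubeD_apply, Finset.smul_sum, smul_smul, Pi.zero_apply]
  rw [Finset.sum_sigma']
  refine Finset.sum_involution (fun x _ => ⟨x.2, x.1⟩) ?_ ?_ ?_ ?_
  · rintro ⟨i, j⟩ h
    simp only [Finset.mem_sigma, Finset.mem_compl, Finset.mem_insert, not_or] at h
    simp only
    rw [cubeSign_anti h.1 h.2.2 (Ne.symm h.2.1), Finset.insert_comm j i B, neg_smul,
      neg_add_cancel]
  · rintro ⟨i, j⟩ h _ h'
    simp only [Finset.mem_sigma, Finset.mem_compl, Finset.mem_insert, not_or] at h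
    simp only [Sigma.mk.injEq, heq_eq_eq] at h'
    exact h.2.1 h'.1
  · rintro ⟨i, j⟩ h
    simp only [Finset.mem_sigma, Finset.mem_compl, Finset.mem_insert, not_or] at h ⊢
    exact ⟨h.2.2, Ne.symm h.2.1, h.1⟩
  · rintro ⟨i, j⟩ h
    rfl

/-- Multiplication by `f` in the direction `a` of the cube, from `B` to `insert a B`; a homotopy
between multiplication by `f` and zero. -/
def cubeH (a : ι) (f : R) (c : Finset ι → F) : Finset ι → F := fun B =>
  if a ∈ B then cubeSign a (B.erase a) • f • c (B.erase a) else 0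

/-- `cubeH a f` commutes with the differential up to multiplication by `f`, for constant
coefficients; the coefficient submodules are only brought in by `cube_primitive`. -/
lemma cubeD_cubeH (a : ι) (f : R) (c : Finset ι → F) :
    cubeD R F (cubeH a f c) + cubeH a f (cubeD R F c) = f • c := by
  ext B
  simp only [Pi.add_apply, Pi.smul_apply, cubeD_apply]
  by_cases ha : a ∈ B
  · obtain ⟨B, haB, rfl⟩ : ∃ B', a ∉ B' ∧ B = insert a B' :=
      ⟨B.erase a, by simp, by rw [Finset.insert_erase ha]⟩
    have hc : Bᶜ = insert a (insert a B)ᶜ := by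
      ext x; simp only [Finset.mem_compl, Finset.mem_insert]; grind
    unfold cubeH
    simp only [Finset.mem_insert_self, if_true, Finset.erase_insert haB, cubeD_apply]
    rw [hc, Finset.sum_insert (by simp), smul_add, smul_add, add_left_comm]
    have h1 : cubeSign a B • f • cubeSign a B • c (insert a B) = f • c (insert a B) := by
      rw [smul_comm f, smul_smul, cubeSign_sq, one_smul]
    rw [h1]
    have h2 : ∑ i ∈ (insert a B)ᶜ, cubeSign i (insert a B) •
          (if a ∈ insert i (insert a B) then
            cubeSign a ((insert i (insert a B)).erase a) • f •
              c ((insert i (insert a B)).erase a) else 0)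
        + cubeSign a B • f • ∑ i ∈ (insert a B)ᶜ, cubeSign i B • c (insert i B) = 0 := by
      rw [Finset.smul_sum, Finset.smul_sum, ← Finset.sum_add_distrib]
      refine Finset.sum_eq_zero fun i hi => ?_
      simp only [Finset.mem_compl, Finset.mem_insert, not_or] at hi
      have h3 : (insert i (insert a B)).erase a = insert i B := by
        rw [Finset.insert_comm, Finset.erase_insert]
        simp [haB, Ne.symm hi.1]
      rw [if_pos (by simp), h3, smul_comm f, smul_smul, smul_smul, ← add_smul]
      have h4 : cubeSign i (insert a B) * cubeSign a (insert i B) +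
          cubeSign a B * cubeSign i B = 0 := by
        rw [cubeSign_insert haB, cubeSign_insert hi.2]
        rcases lt_or_gt_of_ne hi.1 with h | h
        · rw [if_pos h, if_neg h.asymm]; ring
        · rw [if_neg h.asymm, if_pos h]; ring
      rw [h4, zero_smul]
    rw [h2, add_zero]
  · unfold cubeH
    rw [if_neg ha, add_zero, Finset.sum_eq_single a]
    · rw [if_pos (Finset.mem_insert_self _ _), Finset.erase_insert ha, smul_smul, cubeSign_sq,
        one_smul]
    · intro i _ hia
      rw [if_neg (by simp [ha, Ne.symm hia]), smul_zero]
    · intro h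
      exact absurd (Finset.mem_compl.mpr ha) h

end Cube

/-! ### Exactness and Euler characteristic of the cube complex -/

section CubeExact

variable {ι : Type*} [Fintype ι] [LinearOrder ι]

/-- Cycles of the cube complex with coefficients `M B` are boundaries as soon as they lie in
`I • (cycles)`, where `I` is generated by elements `a i` with `a i • M B ⊆ M (insert i B)`. -/
lemma cube_primitive {R F : Type*} [CommRing R] [AddCommGroup F] [Module R F]
    (M : Finset ι → Submodule R F) (a : ι → R)
    (hmul : ∀ i B, i ∉ B → ∀ x ∈ M B, a i • x ∈ M (insert i B))
    (z : Finset ι → F)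
    (hz : z ∈ Ideal.span (Set.range a) • (Submodule.pi Set.univ M ⊓ LinearMap.ker (cubeD R F))) :
    ∃ y ∈ Submodule.pi Set.univ M, cubeD R F y = z := by
  change z ∈ (Submodule.pi Set.univ M).map (cubeD R F)
  refine Submodule.smul_induction_on hz ?_ (fun x y => add_mem)
  intro r hr n hn
  refine Submodule.span_induction (p := fun r _ => r • n ∈ (Submodule.pi Set.univ M).map (cubeD R F))
    ?_ ?_ ?_ ?_ hr
  · rintro _ ⟨i, rfl⟩
    refine ⟨cubeH i (a i) n, ?_, ?_⟩
    · intro B _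
      unfold cubeH
      dsimp only
      split_ifs with h
      · have := hmul i (B.erase i) (by simp) (n (B.erase i)) (hn.1 _ trivial)
        rw [Finset.insert_erase h] at this
        exact zsmul_mem this _
      · exact zero_mem _
    · have := cubeD_cubeH i (a i) n
      rw [LinearMap.mem_ker.mp hn.2] at this
      rw [← this]
      have h0 : cubeH i (a i) (0 : Finset ι → F) = 0 := by
        ext B; simp [cubeH]
      rw [h0, add_zero]
  · simp
  · intro x y _ _ hx hy
    rw [add_smul]; exact add_mem hx hy
  · intro x y _ hy
    rw [smul_eq_mul, mul_smul]; exact Submodule.smul_mem _ _ hy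

lemma finrank_submodule_pi {κ F : Type*} [Fintype κ] [AddCommGroup F] [Module K F]
    (G : κ → Submodule K F) [∀ B, Module.Finite K (G B)] :
    Module.Finite K (Submodule.pi Set.univ G) ∧
    Module.finrank K (Submodule.pi Set.univ G) = ∑ B, Module.finrank K (G B) := by
  let e : (∀ B, G B) ≃ₗ[K] (Submodule.pi Set.univ G) :=
    { toFun := fun c => ⟨fun B => c B, fun B _ => (c B).2⟩
      map_add' := fun _ _ => rfl
      map_smul' := fun _ _ => rfl
      invFun := fun c B => ⟨c.1 B, c.2 B trivial⟩
      left_inv := fun _ => rfl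
      right_inv := fun _ => rfl }
  exact ⟨Module.Finite.equiv e, by rw [← e.finrank_eq, Module.finrank_pi_fintype]⟩

/-- The part of the family `G` of subspaces indexed by the sets satisfying `P`. -/
def cubePart {F : Type*} [AddCommGroup F] [Module K F] (G : Finset ι → Submodule K F)
    (P : Finset ι → Prop) : Submodule K (Finset ι → F) :=
  Submodule.pi Set.univ (fun B => if P B then G B else ⊥)

lemma mem_cubePart {F : Type*} [AddCommGroup F] [Module K F] {G : Finset ι → Submodule K F}
    {P : Finset ι → Prop} {c : Finset ι → F} :
    c ∈ cubePart G P ↔ (∀ B, c B ∈ G B) ∧ ∀ B, ¬ P B → c B = 0 := by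
  constructor
  · intro h
    refine ⟨fun B => ?_, fun B hB => ?_⟩
    · have := h B trivial
      dsimp only at this
      split_ifs at this with h'
      · exact this
      · rw [(Submodule.mem_bot K).mp this]; exact zero_mem _
    · have := h B trivial
      dsimp only at this
      rwa [if_neg hB] at this
  · rintro ⟨h1, h2⟩ B _
    change c B ∈ if P B then G B else ⊥
    split_ifs with h
    · exact h1 B
    · exact h2 B h

/-- For an exact complex and complementary conditions `P` and `Q` on the subsets (in the
application, the two parities), a cycle supported on `P` is the boundary of a family supported
on `Q`. -/
lemma cubePart_exact {F : Type*} [AddCommGroup F] [Module K F] (G : Finset ι → Submodule K F)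
    (hanti : ∀ i B, i ∉ B → G (insert i B) ≤ G B)
    (hexact : ∀ z : Finset ι → F, (∀ B, z B ∈ G B) → cubeD K F z = 0 →
      ∃ y : Finset ι → F, (∀ B, y B ∈ G B) ∧ cubeD K F y = z)
    (P Q : Finset ι → Prop) (hQP : ∀ i B, i ∉ B → (Q (insert i B) ↔ P B)) :
    LinearMap.ker (cubeD K F) ⊓ cubePart G P = (cubePart G Q).map (cubeD K F) := by
  ext z
  constructor
  · rintro ⟨hz, hzP⟩
    rw [SetLike.mem_coe, mem_cubePart] at hzP
    obtain ⟨y, hy, rfl⟩ := hexact z hzP.1 hz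
    refine ⟨fun B => if Q B then y B else 0, ?_, ?_⟩
    · rw [SetLike.mem_coe, mem_cubePart]
      refine ⟨fun B => ?_, fun B hB => by simp [hB]⟩
      split_ifs
      · exact hy B
      · exact zero_mem _
    · ext B
      by_cases hB : P B
      · rw [cubeD_apply, cubeD_apply]
        refine Finset.sum_congr rfl fun i hi => ?_
        rw [if_pos ((hQP i B (Finset.mem_compl.mp hi)).mpr hB)]
      · rw [hzP.2 B hB, cubeD_apply]
        refine Finset.sum_eq_zero fun i hi => ?_
        rw [if_neg (fun h => hB ((hQP i B (Finset.mem_compl.mp hi)).mp h)), smul_zero]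
  · rintro ⟨y, hy, rfl⟩
    rw [SetLike.mem_coe, mem_cubePart] at hy
    refine ⟨cubeD_cubeD y, ?_⟩
    rw [SetLike.mem_coe, mem_cubePart]
    refine ⟨fun B => ?_, fun B hB => ?_⟩
    · rw [cubeD_apply]
      exact sum_mem fun i hi =>
        zsmul_mem (hanti i B (Finset.mem_compl.mp hi) (hy.1 _)) _
    · rw [cubeD_apply]
      refine Finset.sum_eq_zero fun i hi => ?_
      rw [hy.2 _ (fun h => hB ((hQP i B (Finset.mem_compl.mp hi)).mp h)), smul_zero]

/-- An exact cube complex has vanishing Euler characteristic. -/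
lemma cube_euler {F : Type*} [AddCommGroup F] [Module K F] (G : Finset ι → Submodule K F)
    [hfin : ∀ B, Module.Finite K (G B)]
    (hanti : ∀ i B, i ∉ B → G (insert i B) ≤ G B)
    (hexact : ∀ z : Finset ι → F, (∀ B, z B ∈ G B) → cubeD K F z = 0 →
      ∃ y : Finset ι → F, (∀ B, y B ∈ G B) ∧ cubeD K F y = z) :
    ∑ B : Finset ι, (-1 : ℤ) ^ B.card * (Module.finrank K (G B) : ℤ) = 0 := by
  obtain ⟨E, hE⟩ : ∃ E : Finset ι → Prop, ∀ B, E B ↔ Even B.card := ⟨_, fun _ => Iff.rfl⟩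
  obtain ⟨O, hO⟩ : ∃ O : Finset ι → Prop, ∀ B, O B ↔ ¬ E B := ⟨_, fun _ => Iff.rfl⟩
  have hEO : ∀ (i : ι) (B : Finset ι), i ∉ B → (E (insert i B) ↔ O B) := by
    intro i B h
    rw [hO, hE, hE, Finset.card_insert_of_notMem h, Nat.even_add_one]
  have hOE : ∀ (i : ι) (B : Finset ι), i ∉ B → (O (insert i B) ↔ E B) := by
    intro i B h
    rw [hO, hEO i B h, hO, not_not]
  have xE := cubePart_exact G hanti hexact E O hOE
  have xO := cubePart_exact G hanti hexact O E hEO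
  have hfin' : ∀ (P : Finset ι → Prop) (B : Finset ι),
      Module.Finite K ((if P B then G B else ⊥ : Submodule K F)) := by
    intro P B
    by_cases h : P B
    · rw [if_pos h]; exact hfin B
    · rw [if_neg h]; infer_instance
  have key : ∀ P : Finset ι → Prop, Module.Finite K (cubePart G P) ∧
      Module.finrank K (cubePart G P) = ∑ B, if P B then Module.finrank K (G B) else 0 := by
    intro P
    have := hfin' P
    have := finrank_submodule_pi (K := K) (fun B => if P B then G B else ⊥)
    refine ⟨this.1, this.2.trans ?_⟩
    refine Finset.sum_congr rfl fun B _ => ?_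
    by_cases h : P B
    · rw [if_pos h, if_pos h]
    · rw [if_neg h, if_neg h, finrank_bot]
  have rn : ∀ P : Finset ι → Prop,
      Module.finrank K ((cubePart G P).map (cubeD K F)) +
      Module.finrank K (LinearMap.ker (cubeD K F) ⊓ cubePart G P : Submodule K (Finset ι → F)) =
      Module.finrank K (cubePart G P) := by
    intro P
    have := (key P).1
    have h := LinearMap.finrank_range_add_finrank_ker ((cubeD K F).domRestrict (cubePart G P))
    rw [LinearMap.range_domRestrict, LinearMap.ker_domRestrict] at h
    rw [← h]
    congr 1
    rw [← Submodule.finrank_map_subtype_eq (cubePart G P), Submodule.map_comap_subtype, inf_comm]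
  have r1 := rn E
  have r2 := rn O
  rw [xE, (key _).2] at r1
  rw [xO, (key _).2, add_comm] at r2
  have h2 : ∑ B : Finset ι, (-1 : ℤ) ^ B.card * (Module.finrank K (G B) : ℤ) =
      ((∑ B : Finset ι, if E B then Module.finrank K (G B) else 0 : ℕ) : ℤ) -
      ((∑ B : Finset ι, if O B then Module.finrank K (G B) else 0 : ℕ) : ℤ) := by
    push_cast
    rw [← Finset.sum_sub_distrib]
    refine Finset.sum_congr rfl fun B _ => ?_
    by_cases h : E B
    · have h' : ¬ O B := by rw [hO, not_not]; exact h
      rw [if_pos h, if_neg h', ((hE B).mp h).neg_one_pow]; ring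
    · have h' : O B := (hO B).mpr h
      have h3 : Odd B.card := by rwa [← Nat.not_even_iff_odd, ← hE]
      rw [if_neg h, if_pos h', h3.neg_one_pow]; ring
  rw [h2, ← r1, ← r2, sub_self]

end CubeExact

/-! ### Alternating forms on linear forms, and the essential case -/

section Forms

/-- The basis of the dual space made of the coordinate functionals. -/
def coordBasis (K : Type*) [Field K] (ℓ : ℕ) : Module.Basis (Fin ℓ) K (Module.Dual K (Fin ℓ → K)) :=
  (Pi.basisFun K (Fin ℓ)).dualBasis

lemma coordBasis_apply (i : Fin ℓ) (x : Fin ℓ → K) : coordBasis K ℓ i x = x i := by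
  rw [coordBasis, Module.Basis.dualBasis_apply, Pi.basisFun_repr]

/-- `formPoly` as a linear map. -/
def formPolyLin (K : Type*) [Field K] (ℓ : ℕ) :
    Module.Dual K (Fin ℓ → K) →ₗ[K] MvPolynomial (Fin ℓ) K where
  toFun := formPoly
  map_add' a b := by
    simp [formPoly, add_mul, Finset.sum_add_distrib]
  map_smul' c a := by
    simp [formPoly, MvPolynomial.smul_eq_C_mul, Finset.mul_sum, mul_assoc]

lemma formPolyLin_apply (φ : Module.Dual K (Fin ℓ → K)) : formPolyLin K ℓ φ = formPoly φ := rfl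

lemma formPoly_coordBasis (i : Fin ℓ) : formPoly (coordBasis K ℓ i) = X i := by
  rw [formPoly, Finset.sum_eq_single i]
  · simp [coordBasis_apply]
  · intro j _ hj
    simp [coordBasis_apply, Ne.symm hj]
  · simp

lemma formPoly_isHomogeneous (φ : Module.Dual K (Fin ℓ → K)) : (formPoly φ).IsHomogeneous 1 := by
  unfold formPoly
  refine IsHomogeneous.sum _ _ _ fun i _ => ?_
  simpa using (isHomogeneous_C _ _).mul (isHomogeneous_X K i)

lemma homogeneousComponent_homog_mul {σ : Type*} {i : ℕ} {f : MvPolynomial σ K}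
    (hf : f.IsHomogeneous i) (g : MvPolynomial σ K) (e : ℕ) :
    homogeneousComponent e (f * g) =
      if i ≤ e then f * homogeneousComponent (e - i) g else 0 := by
  have key : ∀ k, homogeneousComponent e (f * homogeneousComponent k g) =
      if i ≤ e then f * homogeneousComponent (e - i) (homogeneousComponent k g) else 0 := by
    intro k
    have hk := homogeneousComponent_isHomogeneous k g
    rw [homogeneousComponent_of_mem (hf.mul hk), homogeneousComponent_of_mem hk]
    by_cases h : i ≤ e
    · rw [if_pos h]
      by_cases h2 : e = i + k
      · rw [if_pos h2, if_pos (by omega)]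
      · rw [if_neg h2, if_neg (by omega), mul_zero]
    · rw [if_neg h, if_neg (by omega)]
  conv_lhs => rw [← sum_homogeneousComponent g, Finset.mul_sum, map_sum]
  rw [Finset.sum_congr rfl fun k _ => key k]
  split_ifs with h
  · rw [← Finset.mul_sum, ← map_sum, sum_homogeneousComponent]
  · simp

lemma homogeneousComponent_mul_eq_sum {σ : Type*} (s g : MvPolynomial σ K) (e : ℕ) :
    homogeneousComponent e (s * g) = ∑ i ∈ Finset.range (s.totalDegree + 1),
      if i ≤ e then homogeneousComponent i s * homogeneousComponent (e - i) g else 0 := by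
  conv_lhs => rw [← sum_homogeneousComponent s, Finset.sum_mul, map_sum]
  exact Finset.sum_congr rfl fun i _ =>
    homogeneousComponent_homog_mul (homogeneousComponent_isHomogeneous i s) g e

end Forms

section Model

/-- Alternating `p`-forms on the space of linear forms with values in the polynomial ring: a
`p`-derivation is determined by its values on linear forms, which make up such a map. -/
abbrev AltF (K : Type*) [Field K] (ℓ p : ℕ) :=
  (Module.Dual K (Fin ℓ → K)) [⋀^Fin p]→ₗ[K] (MvPolynomial (Fin ℓ) K)

variable {ι : Type*}

/-- The analogue of `Dp` in `AltF`, for an indexed family of linear forms and multiplicities. -/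
def polyDer (φ : ι → Module.Dual K (Fin ℓ → K)) (m : ι → ℕ) (s : Finset ι) (p : ℕ) :
    Submodule (MvPolynomial (Fin ℓ) K) (AltF K ℓ p) where
  carrier := {θ | ∀ i ∈ s, ∀ w : Fin p → Module.Dual K (Fin ℓ → K), ∀ j, w j = φ i →
    θ w ∈ Ideal.span {formPoly (φ i) ^ m i}}
  add_mem' ha hb i hi w j hw := add_mem (ha i hi w j hw) (hb i hi w j hw)
  zero_mem' _ _ _ _ _ := zero_mem _
  smul_mem' c _ ha i hi w j hw := Ideal.mul_mem_left _ c (ha i hi w j hw)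

/-- The analogue of `DpGraded` in `AltF`. -/
def polyDerGr (φ : ι → Module.Dual K (Fin ℓ → K)) (m : ι → ℕ) (s : Finset ι) (p d : ℕ) :
    Submodule K (AltF K ℓ p) where
  carrier := {θ | θ ∈ polyDer φ m s p ∧ ∀ w, (θ w).IsHomogeneous d}
  add_mem' ha hb := ⟨add_mem ha.1 hb.1, fun w => (ha.2 w).add (hb.2 w)⟩
  zero_mem' := ⟨zero_mem _, fun w => isHomogeneous_zero _ _ d⟩
  smul_mem' c θ hθ := by
    refine ⟨fun i hi w j hw => ?_, fun w => ?_⟩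
    · rw [AlternatingMap.smul_apply, MvPolynomial.smul_eq_C_mul]
      exact Ideal.mul_mem_left _ _ (hθ.1 i hi w j hw)
    · rw [AlternatingMap.smul_apply, MvPolynomial.smul_eq_C_mul]
      simpa using (isHomogeneous_C _ c).mul (hθ.2 w)

/-- An alternating form is determined by its values on the coordinate functionals. -/
lemma AltF.ext_coord {p : ℕ} {θ η : AltF K ℓ p}
    (h : ∀ u : Fin p → Fin ℓ, θ (fun j => coordBasis K ℓ (u j)) =
      η (fun j => coordBasis K ℓ (u j))) : θ = η := by
  apply AlternatingMap.coe_multilinearMap_injective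
  exact Module.Basis.ext_multilinear (fun _ => coordBasis K ℓ) h

/-- The homogeneous component of degree `e` of an alternating form. -/
def altComp (e : ℕ) {p : ℕ} : AltF K ℓ p →ₗ[K] AltF K ℓ p where
  toFun θ := (homogeneousComponent e).compAlternatingMap θ
  map_add' a b := by ext; simp
  map_smul' c a := by ext; simp

lemma altComp_apply (e : ℕ) {p : ℕ} (θ : AltF K ℓ p) (w) :
    altComp e θ w = homogeneousComponent e (θ w) := rfl

lemma altComp_mem {φ : ι → Module.Dual K (Fin ℓ → K)} {m : ι → ℕ} {s : Finset ι} {p : ℕ}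
    {θ : AltF K ℓ p} (hθ : θ ∈ polyDer φ m s p) (e : ℕ) : altComp e θ ∈ polyDer φ m s p := by
  intro i hi w j hw
  rw [altComp_apply]
  obtain ⟨g, hg⟩ := Ideal.mem_span_singleton'.mp (hθ i hi w j hw)
  rw [← hg, mul_comm, homogeneousComponent_homog_mul ((formPoly_isHomogeneous _).pow _)]
  split_ifs
  · exact Ideal.mul_mem_right _ _ (Ideal.subset_span rfl)
  · exact zero_mem _

lemma altComp_mem_gr {φ : ι → Module.Dual K (Fin ℓ → K)} {m : ι → ℕ} {s : Finset ι} {p : ℕ}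
    {θ : AltF K ℓ p} (hθ : θ ∈ polyDer φ m s p) (e : ℕ) : altComp e θ ∈ polyDerGr φ m s p e :=
  ⟨altComp_mem hθ e, fun _ => homogeneousComponent_isHomogeneous _ _⟩

lemma altComp_of_gr {φ : ι → Module.Dual K (Fin ℓ → K)} {m : ι → ℕ} {s : Finset ι} {p e : ℕ}
    {θ : AltF K ℓ p} (hθ : θ ∈ polyDerGr φ m s p e) : altComp e θ = θ := by
  ext1 w
  exact homogeneousComponent_eq_self (hθ.2 w)

lemma AltF.sum_apply {p : ℕ} {κ : Type*} (t : Finset κ) (f : κ → AltF K ℓ p) (w) :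
    (∑ i ∈ t, f i) w = ∑ i ∈ t, f i w :=
  map_sum ({ toFun := fun θ => θ w, map_zero' := rfl, map_add' := fun _ _ => rfl } :
    AltF K ℓ p →+ MvPolynomial (Fin ℓ) K) f t

lemma altComp_smul_eq_sum {p : ℕ} (s : MvPolynomial (Fin ℓ) K) (θ : AltF K ℓ p) (e : ℕ) :
    altComp e (s • θ) = ∑ i ∈ Finset.range (s.totalDegree + 1),
      if i ≤ e then homogeneousComponent i s • altComp (e - i) θ else 0 := by
  ext1 w
  rw [AltF.sum_apply, altComp_apply, AlternatingMap.smul_apply, smul_eq_mul,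
    homogeneousComponent_mul_eq_sum]
  refine Finset.sum_congr rfl fun i _ => ?_
  split_ifs <;> rfl

lemma altComp_eventually_zero {p : ℕ} (θ : AltF K ℓ p) : ∃ D, ∀ j, D < j → altComp j θ = 0 := by
  refine ⟨Finset.univ.sup fun u : Fin p → Fin ℓ =>
    (θ (fun j => coordBasis K ℓ (u j))).totalDegree, fun j hj => ?_⟩
  apply AltF.ext_coord
  intro u
  rw [altComp_apply]
  apply homogeneousComponent_eq_zero
  exact lt_of_le_of_lt (Finset.le_sup (f := fun u : Fin p → Fin ℓ =>
    (θ (fun j => coordBasis K ℓ (u j))).totalDegree) (Finset.mem_univ u)) hj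

instance AltF.isNoetherian (p : ℕ) : IsNoetherian (MvPolynomial (Fin ℓ) K) (AltF K ℓ p) := by
  let f : AltF K ℓ p →ₗ[MvPolynomial (Fin ℓ) K] ((Fin p → Fin ℓ) → MvPolynomial (Fin ℓ) K) :=
    { toFun := fun θ u => θ (fun j => coordBasis K ℓ (u j))
      map_add' := fun _ _ => rfl
      map_smul' := fun _ _ => rfl }
  exact isNoetherian_of_injective f fun θ η h => AltF.ext_coord fun u => congrFun h u

instance polyDerGr_finite (φ : ι → Module.Dual K (Fin ℓ → K)) (m : ι → ℕ) (s : Finset ι)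
    (p d : ℕ) : Module.Finite K (polyDerGr φ m s p d) := by
  have : Module.Finite K (homogeneousSubmodule (Fin ℓ) K d) :=
    Module.Finite.iff_fg.mpr (homogeneousSubmodule_fg (Fin ℓ) K d)
  let f : polyDerGr φ m s p d →ₗ[K] ((Fin p → Fin ℓ) → homogeneousSubmodule (Fin ℓ) K d) :=
    { toFun := fun θ u => ⟨θ.1 (fun j => coordBasis K ℓ (u j)), θ.2.2 _⟩
      map_add' := fun _ _ => rfl
      map_smul' := fun _ _ => rfl }
  refine Module.Finite.of_injective f fun θ η h => Subtype.ext (AltF.ext_coord fun u => ?_)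
  exact congrArg Subtype.val (congrFun h u)

/-- The alternating sum over the subsets `B` of `ι` of the dimensions of the degree-`d` parts
attached to `B`, i.e. the Möbius-inverted Hilbert function of the full family. -/
def cubeDim [Fintype ι] (φ : ι → Module.Dual K (Fin ℓ → K)) (m : ι → ℕ) (p d : ℕ) : ℤ :=
  ∑ B : Finset ι, (-1 : ℤ) ^ B.card * (Module.finrank K (polyDerGr φ m B p d) : ℤ)

/-- If the common kernel of the forms is zero, their powers generate an ideal containing all
homogeneous polynomials of large degree. -/
lemma exists_homog_mem [Fintype ι] (φ : ι → Module.Dual K (Fin ℓ → K)) (m : ι → ℕ)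
    (h0 : ⨅ i, LinearMap.ker (φ i) = ⊥) :
    ∃ R, ∀ e, R ≤ e → ∀ f : MvPolynomial (Fin ℓ) K, f.IsHomogeneous e →
      f ∈ Ideal.span (Set.range fun i => formPoly (φ i) ^ m i) := by
  set I := Ideal.span (Set.range fun i => formPoly (φ i) ^ m i) with hI
  have hle : idealOfVars (Fin ℓ) K ≤ I.radical := by
    rw [idealOfVars, Ideal.span_le]
    rintro _ ⟨j, rfl⟩
    have hj : coordBasis K ℓ j ∈ Submodule.span K (Set.range φ) :=
      mem_span_of_iInf_ker_le_ker (by rw [h0]; exact bot_le)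
    rw [← formPoly_coordBasis, ← formPolyLin_apply]
    have : Submodule.span K (Set.range φ) ≤
        ((I.radical).restrictScalars K).comap (formPolyLin K ℓ) := by
      rw [Submodule.span_le]
      rintro _ ⟨i, rfl⟩
      exact ⟨m i, Ideal.subset_span ⟨i, rfl⟩⟩
    exact this hj
  obtain ⟨R, hR⟩ := Ideal.exists_pow_le_of_le_radical_of_fg hle (idealOfVars_fg _ _)
  refine ⟨R, fun e he f hf => hR ?_⟩
  rw [mem_pow_idealOfVars_iff']
  intro x hx
  exact hf.coeff_eq_zero (by omega)

/-- For an essential family the Möbius-inverted Hilbert function vanishes in large degrees: the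
homology of the cube complex is finitely generated and killed by a power of the irrelevant ideal. -/
lemma cubeDim_eventually_zero [Fintype ι] (φ : ι → Module.Dual K (Fin ℓ → K)) (m : ι → ℕ) (p : ℕ)
    (h0 : ⨅ i, LinearMap.ker (φ i) = ⊥) : ∃ N, ∀ d, N ≤ d → cubeDim φ m p d = 0 := by
  let _ : LinearOrder ι := LinearOrder.lift' (Fintype.equivFin ι) (Fintype.equivFin ι).injective
  obtain ⟨R, hR⟩ := exists_homog_mem φ m h0
  set S := MvPolynomial (Fin ℓ) K
  set Z : Submodule S (Finset ι → AltF K ℓ p) :=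
    Submodule.pi Set.univ (fun B => polyDer φ m B p) ⊓ LinearMap.ker (cubeD S (AltF K ℓ p)) with hZ
  set I := Ideal.span (Set.range fun i => formPoly (φ i) ^ m i) with hI
  -- componentwise homogeneous components
  let comp (e : ℕ) (c : Finset ι → AltF K ℓ p) : Finset ι → AltF K ℓ p := fun B => altComp e (c B)
  have hDcomp : ∀ e c, cubeD S (AltF K ℓ p) (comp e c) = comp e (cubeD S (AltF K ℓ p) c) := by
    intro e c
    ext1 B
    simp only [cubeD_apply, comp, map_sum, map_zsmul]
  have hZcomp : ∀ e, ∀ c ∈ Z, comp e c ∈ Z := by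
    rintro e c ⟨h1, h2⟩
    refine ⟨fun B _ => altComp_mem (h1 B trivial) e, ?_⟩
    rw [SetLike.mem_coe, LinearMap.mem_ker, hDcomp, LinearMap.mem_ker.mp h2]
    ext1 B
    simp [comp]
  have hbound : ∀ g : Finset ι → AltF K ℓ p, ∃ D, ∀ j, D < j → comp j g = 0 := by
    intro g
    choose D hD using fun B => altComp_eventually_zero (g B)
    refine ⟨Finset.univ.sup D, fun j hj => ?_⟩
    ext1 B
    exact hD B j (lt_of_le_of_lt (Finset.le_sup (Finset.mem_univ B)) hj)
  obtain ⟨G, hG⟩ : Z.FG := IsNoetherian.noetherian Z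
  choose D hD using hbound
  refine ⟨R + G.sup D, fun d hd => ?_⟩
  have hIZ : ∀ c ∈ Z, comp d c ∈ I • Z := by
    intro c hc
    rw [← hG, Submodule.mem_span_finset] at hc
    obtain ⟨f, -, rfl⟩ := hc
    have : comp d (∑ a ∈ G, f a • a) = ∑ a ∈ G, comp d (f a • a) := by
      ext1 B
      simp [comp]
    rw [this]
    refine sum_mem fun a ha => ?_
    have haZ : a ∈ Z := hG ▸ Submodule.subset_span ha
    have : comp d (f a • a) = ∑ i ∈ Finset.range ((f a).totalDegree + 1),
        if i ≤ d then homogeneousComponent i (f a) • comp (d - i) a else 0 := by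
      ext1 B
      rw [Finset.sum_apply]
      refine (altComp_smul_eq_sum _ _ _).trans ?_
      refine Finset.sum_congr rfl fun i _ => ?_
      split_ifs <;> rfl
    rw [this]
    refine sum_mem fun i _ => ?_
    split_ifs with hi
    · by_cases h : D a < d - i
      · rw [hD a _ h, smul_zero]; exact zero_mem _
      · have hDa : D a ≤ G.sup D := Finset.le_sup ha
        exact Submodule.smul_mem_smul
          (hR i (by omega) _ (homogeneousComponent_isHomogeneous _ _)) (hZcomp _ _ haZ)
    · exact zero_mem _
  refine cube_euler (fun B => polyDerGr φ m B p d) ?_ ?_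
  · intro i B _ θ hθ
    exact ⟨fun j hj => hθ.1 j (Finset.mem_insert_of_mem hj), hθ.2⟩
  · intro z hz hz0
    have hDK : ∀ c : Finset ι → AltF K ℓ p, cubeD S (AltF K ℓ p) c = cubeD K (AltF K ℓ p) c :=
      fun _ => rfl
    have hzZ : z ∈ Z := ⟨fun B _ => (hz B).1, by
      rw [SetLike.mem_coe, LinearMap.mem_ker, hDK, hz0]⟩
    have hzc : comp d z = z := by
      ext1 B
      exact altComp_of_gr (hz B)
    have h1 := hIZ z hzZ
    rw [hzc] at h1
    have hmul : ∀ (i : ι) (B : Finset ι), i ∉ B → ∀ θ ∈ polyDer φ m B p,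
        (formPoly (φ i) ^ m i) • θ ∈ polyDer φ m (insert i B) p := by
      intro i B _ θ hθ j hj w k hw
      rcases Finset.mem_insert.mp hj with rfl | hj
      · exact Ideal.mul_mem_right _ _ (Ideal.subset_span rfl)
      · exact Ideal.mul_mem_left _ _ (hθ j hj w k hw)
    obtain ⟨y, hy, hyz⟩ := cube_primitive (fun B => polyDer φ m B p)
      (fun i => formPoly (φ i) ^ m i) hmul z h1
    refine ⟨comp d y, fun B => altComp_mem_gr (hy B trivial) d, ?_⟩
    rw [← hDK, hDcomp, hyz, hzc]

end Model

/-! ### Linear changes of coordinates and reduction modulo a variable -/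

section LinearChange

variable {ι : Type*}

/-- Composition of polynomial functions with the linear map `g`, as a homomorphism of polynomial
rings. -/
def linSubst {n k : ℕ} (g : (Fin k → K) →ₗ[K] (Fin n → K)) :
    MvPolynomial (Fin n) K →ₐ[K] MvPolynomial (Fin k) K :=
  aeval fun i => formPoly (coordBasis K n i ∘ₗ g)

lemma linSubst_formPoly {n k : ℕ} (g : (Fin k → K) →ₗ[K] (Fin n → K))
    (φ : Module.Dual K (Fin n → K)) :
    linSubst g (formPoly φ) = formPoly (φ ∘ₗ g) := by
  have : (linSubst g).toLinearMap ∘ₗ formPolyLin K n = formPolyLin K k ∘ₗ g.dualMap := by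
    refine (coordBasis K n).ext fun i => ?_
    simp only [LinearMap.comp_apply, formPolyLin_apply, formPoly_coordBasis,
      AlgHom.toLinearMap_apply, linSubst, aeval_X]
    rfl
  exact LinearMap.congr_fun this φ

lemma linSubst_comp {n k l : ℕ} (g : (Fin k → K) →ₗ[K] (Fin n → K))
    (h : (Fin l → K) →ₗ[K] (Fin k → K)) (f : MvPolynomial (Fin n) K) :
    linSubst h (linSubst g f) = linSubst (g ∘ₗ h) f := by
  have : (linSubst h).comp (linSubst g) = linSubst (g ∘ₗ h) := by
    refine algHom_ext fun i => ?_
    rw [AlgHom.comp_apply, ← formPoly_coordBasis, linSubst_formPoly, linSubst_formPoly,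
      linSubst_formPoly]
    rfl
  exact AlgHom.congr_fun this f

lemma linSubst_id {n : ℕ} (f : MvPolynomial (Fin n) K) : linSubst LinearMap.id f = f := by
  have : linSubst (LinearMap.id : (Fin n → K) →ₗ[K] _) = AlgHom.id K _ := by
    refine algHom_ext fun i => ?_
    rw [← formPoly_coordBasis, linSubst_formPoly]
    rfl
  exact AlgHom.congr_fun this f

lemma linSubst_isHomogeneous {n k d : ℕ} (g : (Fin k → K) →ₗ[K] (Fin n → K))
    {f : MvPolynomial (Fin n) K} (hf : f.IsHomogeneous d) : (linSubst g f).IsHomogeneous d := by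
  have := hf.aeval (fun i => formPoly (coordBasis K n i ∘ₗ g))
    (fun i => formPoly_isHomogeneous _)
  simpa [linSubst] using this

lemma linSubst_mem_span {n k : ℕ} (g : (Fin k → K) →ₗ[K] (Fin n → K))
    {φ : Module.Dual K (Fin n → K)} {a : ℕ} {f : MvPolynomial (Fin n) K}
    (hf : f ∈ Ideal.span {formPoly φ ^ a}) :
    linSubst g f ∈ Ideal.span {formPoly (φ ∘ₗ g) ^ a} := by
  obtain ⟨h, rfl⟩ := Ideal.mem_span_singleton'.mp hf
  rw [map_mul, map_pow, linSubst_formPoly]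
  exact Ideal.mul_mem_left _ _ (Ideal.subset_span rfl)

lemma finrank_polyDerGr_le (g : (Fin ℓ → K) ≃ₗ[K] (Fin ℓ → K))
    (φ : ι → Module.Dual K (Fin ℓ → K)) (m : ι → ℕ) (s : Finset ι) (p d : ℕ) :
    Module.finrank K (polyDerGr φ m s p d) ≤
      Module.finrank K (polyDerGr (fun i => φ i ∘ₗ g.toLinearMap) m s p d) := by
  let T : AltF K ℓ p →ₗ[K] AltF K ℓ p :=
    { toFun := fun θ => ((linSubst g.toLinearMap).toLinearMap.compAlternatingMap θ).compLinearMap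
        g.symm.toLinearMap.dualMap
      map_add' := fun a b => by ext; simp
      map_smul' := fun c a => by ext; simp }
  have hT : ∀ θ w, T θ w = linSubst g.toLinearMap (θ fun j => w j ∘ₗ g.symm.toLinearMap) :=
    fun _ _ => rfl
  have hmem : ∀ θ ∈ polyDerGr φ m s p d,
      T θ ∈ polyDerGr (fun i => φ i ∘ₗ g.toLinearMap) m s p d := by
    intro θ hθ
    refine ⟨fun i hi w j hw => ?_, fun w => ?_⟩
    · rw [hT]
      refine linSubst_mem_span _ (hθ.1 i hi _ j ?_)
      rw [hw]
      ext x
      simp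
    · rw [hT]
      exact linSubst_isHomogeneous _ (hθ.2 _)
  refine LinearMap.finrank_le_finrank_of_injective (f := T.restrict hmem) ?_
  rintro ⟨θ, hθ⟩ ⟨η, hη⟩ h
  have h1 : T θ = T η := congrArg Subtype.val h
  refine Subtype.ext (AlternatingMap.ext fun w => ?_)
  have h2 := congrArg (fun τ : AltF K ℓ p =>
    linSubst g.symm.toLinearMap (τ fun j => w j ∘ₗ g.toLinearMap)) h1
  simp only [hT, linSubst_comp] at h2
  have hg : g.toLinearMap ∘ₗ g.symm.toLinearMap = LinearMap.id := by ext; simp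
  simpa only [hg, linSubst_id, LinearMap.comp_assoc, LinearMap.comp_id] using h2

/-- The graded dimensions do not change under a linear change of coordinates. -/
lemma finrank_polyDerGr_equiv (g : (Fin ℓ → K) ≃ₗ[K] (Fin ℓ → K))
    (φ : ι → Module.Dual K (Fin ℓ → K)) (m : ι → ℕ) (s : Finset ι) (p d : ℕ) :
    Module.finrank K (polyDerGr (fun i => φ i ∘ₗ g.toLinearMap) m s p d) =
      Module.finrank K (polyDerGr φ m s p d) := by
  refine le_antisymm ?_ (finrank_polyDerGr_le g φ m s p d)
  have := finrank_polyDerGr_le g.symm (fun i => φ i ∘ₗ g.toLinearMap) m s p d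
  have h2 : (fun i => (φ i ∘ₗ g.toLinearMap) ∘ₗ g.symm.toLinearMap) = φ := by
    funext i; ext x; simp
  rwa [h2] at this

end LinearChange

section Split

variable {ι : Type*}

/-- Dropping the zeroth coordinate. -/
def dropZero (K : Type*) [Field K] (ℓ : ℕ) : (Fin (ℓ + 1) → K) →ₗ[K] (Fin ℓ → K) :=
  LinearMap.funLeft K K Fin.succ

/-- Inclusion as the hyperplane where the zeroth coordinate vanishes. -/
def consZero (K : Type*) [Field K] (ℓ : ℕ) : (Fin ℓ → K) →ₗ[K] (Fin (ℓ + 1) → K) where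
  toFun x := Fin.cons 0 x
  map_add' x y := by
    ext i; refine Fin.cases ?_ (fun i => ?_) i <;> simp
  map_smul' c x := by
    ext i; refine Fin.cases ?_ (fun i => ?_) i <;> simp

lemma dropZero_comp_consZero : dropZero K ℓ ∘ₗ consZero K ℓ = LinearMap.id := by
  ext x i; simp [dropZero, consZero, LinearMap.funLeft]

/-- Pulling back linear forms along `dropZero`. -/
def jW (φ : Module.Dual K (Fin ℓ → K)) : Module.Dual K (Fin (ℓ + 1) → K) := φ ∘ₗ dropZero K ℓ

/-- Restricting linear forms along `consZero`. -/
def piW (φ : Module.Dual K (Fin (ℓ + 1) → K)) : Module.Dual K (Fin ℓ → K) := φ ∘ₗ consZero K ℓ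

lemma piW_jW (φ : Module.Dual K (Fin ℓ → K)) : piW (jW φ) = φ := by
  rw [piW, jW, LinearMap.comp_assoc, dropZero_comp_consZero, LinearMap.comp_id]

lemma jW_coordBasis (i : Fin ℓ) : jW (coordBasis K ℓ i) = coordBasis K (ℓ + 1) i.succ := by
  ext x
  simp [jW, coordBasis_apply, dropZero, LinearMap.funLeft]

lemma piW_coordBasis_zero : piW (coordBasis K (ℓ + 1) 0) = 0 := by
  refine LinearMap.ext fun x => ?_
  simp only [piW, LinearMap.comp_apply, coordBasis_apply]
  rfl

/-- Setting the zeroth variable to zero. -/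
def evS : MvPolynomial (Fin (ℓ + 1)) K →ₐ[K] MvPolynomial (Fin ℓ) K := linSubst (consZero K ℓ)

/-- Including the polynomials not involving the zeroth variable. -/
def inS : MvPolynomial (Fin ℓ) K →ₐ[K] MvPolynomial (Fin (ℓ + 1)) K := linSubst (dropZero K ℓ)

lemma evS_formPoly (φ : Module.Dual K (Fin (ℓ + 1) → K)) :
    evS (formPoly φ) = formPoly (piW φ) := linSubst_formPoly _ _

lemma inS_formPoly (φ : Module.Dual K (Fin ℓ → K)) : inS (formPoly φ) = formPoly (jW φ) :=
  linSubst_formPoly _ _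

lemma evS_inS (f : MvPolynomial (Fin ℓ) K) : evS (inS f) = f := by
  rw [evS, inS, linSubst_comp, dropZero_comp_consZero, linSubst_id]

lemma evS_X_zero : evS (X 0 : MvPolynomial (Fin (ℓ + 1)) K) = 0 := by
  rw [← formPoly_coordBasis, evS_formPoly, piW_coordBasis_zero, ← formPolyLin_apply, map_zero]

lemma inS_evS_X_succ (i : Fin ℓ) :
    inS (evS (X i.succ : MvPolynomial (Fin (ℓ + 1)) K)) = X i.succ := by
  rw [← formPoly_coordBasis, ← jW_coordBasis, evS_formPoly, piW_jW, inS_formPoly]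

lemma X_zero_dvd {f : MvPolynomial (Fin (ℓ + 1)) K} (hf : evS f = 0) : X 0 ∣ f := by
  have key : (Ideal.Quotient.mkₐ K (Ideal.span {(X 0 : MvPolynomial (Fin (ℓ + 1)) K)})) =
      (Ideal.Quotient.mkₐ K (Ideal.span {(X 0 : MvPolynomial (Fin (ℓ + 1)) K)})).comp
        (inS.comp evS) := by
    refine algHom_ext fun i => ?_
    refine Fin.cases ?_ (fun i => ?_) i
    · rw [AlgHom.comp_apply, AlgHom.comp_apply, evS_X_zero, map_zero, map_zero,
        Ideal.Quotient.mkₐ_eq_mk, Ideal.Quotient.eq_zero_iff_mem]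
      exact Ideal.subset_span rfl
    · rw [AlgHom.comp_apply, AlgHom.comp_apply, inS_evS_X_succ]
  have h := AlgHom.congr_fun key f
  rw [AlgHom.comp_apply, AlgHom.comp_apply, hf, map_zero, map_zero, Ideal.Quotient.mkₐ_eq_mk,
    Ideal.Quotient.eq_zero_iff_mem, Ideal.mem_span_singleton] at h
  exact h

/-- The zeroth variable is a nonzerodivisor modulo powers of forms not involving it. -/
lemma mem_span_of_X_zero_mul {φ : Module.Dual K (Fin ℓ → K)} {a : ℕ}
    {f : MvPolynomial (Fin (ℓ + 1)) K}
    (hf : X 0 * f ∈ Ideal.span {formPoly (jW φ) ^ a}) : f ∈ Ideal.span {formPoly (jW φ) ^ a} := by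
  obtain ⟨h, hh⟩ := Ideal.mem_span_singleton'.mp hf
  by_cases h0 : formPoly (jW φ) ^ a = 0
  · rw [h0, mul_zero] at hh
    rcases mul_eq_zero.mp hh.symm with h1 | h1
    · exact absurd h1 (X_ne_zero _)
    · rw [h1]; exact zero_mem _
  · have h1 : evS h = 0 := by
      have := congrArg evS hh
      rw [map_mul, map_mul, evS_X_zero, zero_mul] at this
      refine (mul_eq_zero.mp this).resolve_right fun h2 => h0 ?_
      have h3 := congrArg inS h2
      rwa [map_pow, map_pow, evS_formPoly, inS_formPoly, piW_jW, map_zero] at h3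
    obtain ⟨h', rfl⟩ := X_zero_dvd h1
    rw [mul_assoc] at hh
    rw [← mul_left_cancel₀ (X_ne_zero _) hh]
    exact Ideal.mul_mem_left _ _ (Ideal.subset_span rfl)

/-- Multiplication by the zeroth variable. -/
def mulX (p : ℕ) : AltF K (ℓ + 1) p →ₗ[K] AltF K (ℓ + 1) p where
  toFun θ := (X 0 : MvPolynomial (Fin (ℓ + 1)) K) • θ
  map_add' _ _ := smul_add _ _ _
  map_smul' _ _ := smul_comm _ _ _

lemma mulX_apply {p : ℕ} (θ : AltF K (ℓ + 1) p) (w) : mulX p θ w = X 0 * θ w := rfl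

lemma mulX_injective (p : ℕ) : Function.Injective (mulX (K := K) (ℓ := ℓ) p) := by
  intro θ η h
  ext1 w
  have : mulX p θ w = mulX p η w := by rw [h]
  rw [mulX_apply, mulX_apply] at this
  exact mul_left_cancel₀ (X_ne_zero _) this

lemma exists_mulX_eq {p : ℕ} (θ : AltF K (ℓ + 1) p) (h : ∀ w, evS (θ w) = 0) :
    ∃ η, mulX p η = θ := by
  let L : MvPolynomial (Fin (ℓ + 1)) K →ₗ[K] MvPolynomial (Fin (ℓ + 1)) K :=
    LinearMap.mulLeft K (X 0)
  have hL : Function.Injective L := fun a b hab => mul_left_cancel₀ (X_ne_zero (R := K) 0) hab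
  have hr : ∀ w, θ w ∈ L.range := fun w => by
    obtain ⟨c, hc⟩ := X_zero_dvd (h w)
    exact ⟨c, hc.symm⟩
  refine ⟨(LinearEquiv.ofInjective L hL).symm.toLinearMap.compAlternatingMap
    (θ.codRestrict (L.range) hr), ?_⟩
  ext1 w
  rw [mulX_apply]
  change L ((LinearEquiv.ofInjective L hL).symm (⟨θ w, hr w⟩ : L.range)) = θ w
  exact congrArg Subtype.val ((LinearEquiv.ofInjective L hL).apply_symm_apply ⟨θ w, hr w⟩)

/-- The alternating forms of degree `d + 1` vanishing when the zeroth variable is set to zero are the multiples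
of that variable. -/
lemma map_mulX {V : Type*} [AddCommGroup V] [Module K V] {p : ℕ} (Φ : AltF K (ℓ + 1) p →ₗ[K] V)
    (hΦ : ∀ θ, Φ θ = 0 ↔ ∀ w, evS (θ w) = 0)
    (φ : ι → Module.Dual K (Fin ℓ → K)) (m : ι → ℕ) (s : Finset ι) (d : ℕ) :
    LinearMap.ker Φ ⊓ polyDerGr (fun i => jW (φ i)) m s p (d + 1) =
      (polyDerGr (fun i => jW (φ i)) m s p d).map (mulX p) := by
  ext θ
  constructor
  · rintro ⟨h1, h2⟩
    obtain ⟨η, rfl⟩ := exists_mulX_eq θ ((hΦ θ).mp h1)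
    refine ⟨η, ⟨fun i hi w j hw => ?_, fun w => ?_⟩, rfl⟩
    · exact mem_span_of_X_zero_mul (h2.1 i hi w j hw)
    · have h3 := homogeneousComponent_eq_self (h2.2 w)
      rw [mulX_apply, homogeneousComponent_homog_mul (isHomogeneous_X _ _),
        if_pos (Nat.le_add_left _ _), Nat.add_sub_cancel] at h3
      rw [← mul_left_cancel₀ (X_ne_zero _) h3]
      exact homogeneousComponent_isHomogeneous _ _
  · rintro ⟨η, hη, rfl⟩
    refine ⟨(hΦ _).mpr fun w => ?_, fun i hi w j hw => ?_, fun w => ?_⟩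
    · rw [mulX_apply, map_mul, evS_X_zero, zero_mul]
    · exact Ideal.mul_mem_left _ _ (hη.1 i hi w j hw)
    · rw [mulX_apply, add_comm d]
      exact (isHomogeneous_X _ _).mul (hη.2 w)

lemma ker_inf_degree_zero {V : Type*} [AddCommGroup V] [Module K V] {p : ℕ}
    (Φ : AltF K (ℓ + 1) p →ₗ[K] V) (hΦ : ∀ θ, Φ θ = 0 ↔ ∀ w, evS (θ w) = 0)
    (φ : ι → Module.Dual K (Fin ℓ → K)) (m : ι → ℕ) (s : Finset ι) :
    LinearMap.ker Φ ⊓ polyDerGr (fun i => jW (φ i)) m s p 0 = ⊥ := by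
  rw [eq_bot_iff]
  rintro θ ⟨h1, h2⟩
  obtain ⟨η, rfl⟩ := exists_mulX_eq θ ((hΦ θ).mp h1)
  rw [Submodule.mem_bot]
  ext1 w
  have h3 := homogeneousComponent_eq_self (h2.2 w)
  rw [mulX_apply, homogeneousComponent_homog_mul (isHomogeneous_X _ _), if_neg (by omega)] at h3
  rw [mulX_apply, ← h3]; rfl

lemma finrank_map_add_inf_ker {V W : Type*} [AddCommGroup V] [Module K V] [AddCommGroup W]
    [Module K W] (Φ : V →ₗ[K] W) (P : Submodule K V) [Module.Finite K P] :
    Module.finrank K (P.map Φ) + Module.finrank K (LinearMap.ker Φ ⊓ P : Submodule K V) =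
      Module.finrank K P := by
  have h := LinearMap.finrank_range_add_finrank_ker (Φ.domRestrict P)
  rw [LinearMap.range_domRestrict, LinearMap.ker_domRestrict] at h
  rw [← h]
  congr 1
  rw [← Submodule.finrank_map_subtype_eq P, Submodule.map_comap_subtype, inf_comm]

/-- The Hilbert function of a family not involving the zeroth variable is the summatory function of
the Hilbert function of its reduction `Φ` modulo that variable. Two maps `Φ` are needed, for `p = 0`
and for `p > 0`, hence the abstract formulation. -/
lemma finrank_split {V : Type*} [AddCommGroup V] [Module K V] {p : ℕ}
    (Φ : AltF K (ℓ + 1) p →ₗ[K] V) (hΦ : ∀ θ, Φ θ = 0 ↔ ∀ w, evS (θ w) = 0)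
    (φ : ι → Module.Dual K (Fin ℓ → K)) (m : ι → ℕ) (s : Finset ι) :
    Module.finrank K (polyDerGr (fun i => jW (φ i)) m s p 0) =
      Module.finrank K ((polyDerGr (fun i => jW (φ i)) m s p 0).map Φ) ∧
    ∀ d, Module.finrank K (polyDerGr (fun i => jW (φ i)) m s p (d + 1)) =
      Module.finrank K ((polyDerGr (fun i => jW (φ i)) m s p (d + 1)).map Φ) +
      Module.finrank K (polyDerGr (fun i => jW (φ i)) m s p d) := by
  constructor
  · rw [← finrank_map_add_inf_ker Φ, ker_inf_degree_zero Φ hΦ, finrank_bot, add_zero]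
  · intro d
    rw [← finrank_map_add_inf_ker Φ (polyDerGr _ _ _ _ (d + 1)), map_mulX Φ hΦ]
    congr 1
    exact ((Submodule.equivMapOfInjective _ (mulX_injective p) _).finrank_eq).symm

end Split

/-! ### Splitting off a variable on which no form depends -/

section Restriction

variable {ι : Type*}

/-- Restriction of an alternating form to the linear forms not involving the zeroth variable,
reduced modulo that variable. -/
def resJ (p : ℕ) : AltF K (ℓ + 1) p →ₗ[K] AltF K ℓ p where
  toFun θ := (evS.toLinearMap.compAlternatingMap θ).compLinearMap (dropZero K ℓ).dualMap
  map_add' a b := by ext; simp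
  map_smul' c a := by ext; simp

lemma resJ_apply {p : ℕ} (θ : AltF K (ℓ + 1) p) (w) :
    resJ p θ w = evS (θ fun j => jW (w j)) := rfl

/-- Contraction of an alternating form with the zeroth variable, followed by `resJ`. -/
def resC (p : ℕ) : AltF K (ℓ + 1) (p + 1) →ₗ[K] AltF K ℓ p where
  toFun θ := resJ p (θ.curryLeft (coordBasis K (ℓ + 1) 0))
  map_add' a b := by ext; simp [resJ_apply]
  map_smul' c a := by ext; simp [resJ_apply]

lemma resC_apply {p : ℕ} (θ : AltF K (ℓ + 1) (p + 1)) (w) :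
    resC p θ w = evS (θ (Matrix.vecCons (coordBasis K (ℓ + 1) 0) fun j => jW (w j))) := rfl

/-- An alternating map vanishes if it does so on linear forms not involving the zeroth variable, and
after contraction with the zeroth variable on such forms. -/
lemma AltF.ext_eq_zero {N : Type*} [AddCommGroup N] [Module K N] {p : ℕ}
    (η : (Module.Dual K (Fin (ℓ + 1) → K)) [⋀^Fin (p + 1)]→ₗ[K] N)
    (h1 : ∀ w : Fin (p + 1) → Module.Dual K (Fin ℓ → K), η (fun j => jW (w j)) = 0)
    (h2 : ∀ w : Fin p → Module.Dual K (Fin ℓ → K),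
      η (Matrix.vecCons (coordBasis K (ℓ + 1) 0) fun j => jW (w j)) = 0) : η = 0 := by
  apply AlternatingMap.coe_multilinearMap_injective
  refine Module.Basis.ext_multilinear (fun _ => coordBasis K (ℓ + 1)) fun u => ?_
  change η (fun j => coordBasis K (ℓ + 1) (u j)) = 0
  by_cases h : ∃ j, u j = 0
  · obtain ⟨j, hj⟩ := h
    by_cases h' : ∃ i, i ≠ j ∧ u i = 0
    · obtain ⟨i, hij, hi⟩ := h'
      exact η.map_eq_zero_of_eq _ (by rw [hi, hj]) hij
    · push Not at h'
      choose u' hu' using fun i : Fin p => Fin.exists_succ_eq.mpr (h' (j.succAbove i)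
        (Fin.succAbove_ne j i))
      have : (fun j => coordBasis K (ℓ + 1) (u j)) = j.insertNth (coordBasis K (ℓ + 1) 0)
          (fun i => jW (coordBasis K ℓ (u' i))) := by
        refine Fin.eq_insertNth_iff.mpr ⟨by rw [hj], ?_⟩
        funext i
        rw [jW_coordBasis, hu']
        rfl
      rw [this, AlternatingMap.map_insertNth, h2, smul_zero]
  · push Not at h
    choose u' hu' using fun i => Fin.exists_succ_eq.mpr (h i)
    have : (fun j => coordBasis K (ℓ + 1) (u j)) = fun j => jW (coordBasis K ℓ (u' j)) := by
      funext i
      rw [jW_coordBasis, hu']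
    rw [this, h1]

/-- The pair of reductions `resJ`, `resC` together detects divisibility by the zeroth variable. -/
lemma res_eq_zero_iff {p : ℕ} (θ : AltF K (ℓ + 1) (p + 1)) :
    (resJ (p + 1)).prod (resC p) θ = 0 ↔ ∀ w, evS (θ w) = 0 := by
  constructor
  · intro h w
    have h1 : resJ (p + 1) θ = 0 := congrArg Prod.fst h
    have h2 : resC p θ = 0 := congrArg Prod.snd h
    have := AltF.ext_eq_zero (evS.toLinearMap.compAlternatingMap θ)
      (fun w => by
        have := congrArg (fun τ => τ w) h1
        exact this)
      (fun w => by
        have := congrArg (fun τ => τ w) h2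
        exact this)
    exact congrArg (fun τ => τ w) this
  · intro h
    refine Prod.ext (AlternatingMap.ext fun w => ?_) (AlternatingMap.ext fun w => ?_)
    · exact h _
    · exact h _

lemma res_zero_eq_zero_iff (θ : AltF K (ℓ + 1) 0) :
    resJ 0 θ = 0 ↔ ∀ w, evS (θ w) = 0 := by
  constructor
  · intro h w
    have := congrArg (fun τ => τ ![]) h
    simp only [resJ_apply] at this
    rw [Subsingleton.elim w]
    exact this
  · intro h
    exact AlternatingMap.ext fun w => h _

/-- Extension of an alternating form along `piW`; it vanishes as soon as one argument is the
zeroth variable. -/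
def extJ (p : ℕ) (η : AltF K ℓ p) : AltF K (ℓ + 1) p :=
  (inS.toLinearMap.compAlternatingMap η).compLinearMap (consZero K ℓ).dualMap

lemma extJ_apply {p : ℕ} (η : AltF K ℓ p) (w) : extJ p η w = inS (η fun j => piW (w j)) := rfl

/-- Exterior product of `extJ η` with the coefficient functional of the zeroth variable. -/
def extC (p : ℕ) (η : AltF K ℓ p) : AltF K (ℓ + 1) (p + 1) :=
  AlternatingMap.alternatizeUncurryFin
    { toFun := fun φ => φ (Pi.single 0 1) • extJ p η
      map_add' := fun _ _ => add_smul _ _ _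
      map_smul' := fun _ _ => mul_smul _ _ _ }

lemma extC_apply {p : ℕ} (η : AltF K ℓ p) (w) : extC p η w =
    ∑ i : Fin (p + 1), (-1 : ℤ) ^ (i : ℕ) • (w i (Pi.single 0 1) • extJ p η (i.removeNth w)) :=
  AlternatingMap.alternatizeUncurryFin_apply _ _

lemma jW_single_zero (φ : Module.Dual K (Fin ℓ → K)) : jW φ (Pi.single 0 1) = 0 := by
  have : dropZero K ℓ (Pi.single 0 1) = 0 := by
    ext i; simp [dropZero, LinearMap.funLeft]
  rw [jW, LinearMap.comp_apply, this, map_zero]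

lemma evS_mem_span {φ : Module.Dual K (Fin ℓ → K)} {a : ℕ} {f : MvPolynomial (Fin (ℓ + 1)) K}
    (hf : f ∈ Ideal.span {formPoly (jW φ) ^ a}) : evS f ∈ Ideal.span {formPoly φ ^ a} := by
  have := linSubst_mem_span (consZero K ℓ) hf
  change _ ∈ Ideal.span {formPoly (piW (jW φ)) ^ a} at this
  rwa [piW_jW] at this

lemma inS_mem_span {φ : Module.Dual K (Fin ℓ → K)} {a : ℕ} {f : MvPolynomial (Fin ℓ) K}
    (hf : f ∈ Ideal.span {formPoly φ ^ a}) : inS f ∈ Ideal.span {formPoly (jW φ) ^ a} :=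
  linSubst_mem_span (dropZero K ℓ) hf

variable (φ : ι → Module.Dual K (Fin ℓ → K)) (m : ι → ℕ) (s : Finset ι)

lemma resJ_mem {p d : ℕ} {θ : AltF K (ℓ + 1) p}
    (hθ : θ ∈ polyDerGr (fun i => jW (φ i)) m s p d) : resJ p θ ∈ polyDerGr φ m s p d := by
  refine ⟨fun i hi w j hw => ?_, fun w => linSubst_isHomogeneous _ (hθ.2 _)⟩
  rw [resJ_apply]
  exact evS_mem_span (hθ.1 i hi _ j (by rw [hw]))

lemma resC_mem {p d : ℕ} {θ : AltF K (ℓ + 1) (p + 1)}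
    (hθ : θ ∈ polyDerGr (fun i => jW (φ i)) m s (p + 1) d) : resC p θ ∈ polyDerGr φ m s p d := by
  refine ⟨fun i hi w j hw => ?_, fun w => linSubst_isHomogeneous _ (hθ.2 _)⟩
  rw [resC_apply]
  exact evS_mem_span (hθ.1 i hi _ j.succ (by rw [Matrix.cons_val_succ, hw]))

lemma extJ_mem {p d : ℕ} {η : AltF K ℓ p} (hη : η ∈ polyDerGr φ m s p d) :
    extJ p η ∈ polyDerGr (fun i => jW (φ i)) m s p d := by
  refine ⟨fun i hi w j hw => ?_, fun w => linSubst_isHomogeneous _ (hη.2 _)⟩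
  rw [extJ_apply]
  exact inS_mem_span (hη.1 i hi _ j (by rw [hw, piW_jW]))

/-- In the expansion of `extC`, the term whose coefficient is taken at a form `jW φ` vanishes; in all
others that form remains an argument of `extJ`. -/
lemma extC_mem {p d : ℕ} {η : AltF K ℓ p} (hη : η ∈ polyDerGr φ m s p d) :
    extC p η ∈ polyDerGr (fun i => jW (φ i)) m s (p + 1) d := by
  have hJ := extJ_mem φ m s hη
  refine ⟨fun i hi w j hw => ?_, fun w => ?_⟩
  · rw [extC_apply]
    refine sum_mem fun k _ => zsmul_mem ?_ _
    rw [MvPolynomial.smul_eq_C_mul]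
    by_cases hkj : k = j
    · rw [hkj, hw, jW_single_zero, map_zero, zero_mul]; exact zero_mem _
    · obtain ⟨j', rfl⟩ := Fin.exists_succAbove_eq (Ne.symm hkj)
      exact Ideal.mul_mem_left _ _ (hJ.1 i hi _ j' hw)
  · rw [extC_apply, ← mem_homogeneousSubmodule]
    exact sum_mem fun k _ => zsmul_mem (Submodule.smul_mem _ _ (hJ.2 _)) _

lemma resJ_extJ {p : ℕ} (η : AltF K ℓ p) : resJ p (extJ p η) = η := by
  ext1 w
  rw [resJ_apply, extJ_apply, evS_inS]
  simp only [piW_jW]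

lemma resC_extJ {p : ℕ} (η : AltF K ℓ (p + 1)) : resC p (extJ (p + 1) η) = 0 := by
  ext1 w
  rw [resC_apply, extJ_apply, evS_inS]
  exact η.map_coord_zero 0 (by rw [Matrix.cons_val_zero, piW_coordBasis_zero])

lemma resJ_extC {p : ℕ} (η : AltF K ℓ p) : resJ (p + 1) (extC p η) = 0 := by
  ext1 w
  rw [resJ_apply, extC_apply, Finset.sum_eq_zero, map_zero]
  · rfl
  · intro i _
    rw [jW_single_zero, zero_smul, smul_zero]

lemma resC_extC {p : ℕ} (η : AltF K ℓ p) : resC p (extC p η) = η := by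
  ext1 w
  rw [resC_apply, extC_apply, Fin.sum_univ_succ, Finset.sum_eq_zero, add_zero]
  · rw [Matrix.cons_val_zero, coordBasis_apply, Pi.single_eq_same, one_smul]
    have : (Fin.removeNth 0 (Matrix.vecCons (coordBasis K (ℓ + 1) 0) fun j => jW (w j))) =
        fun j => jW (w j) := rfl
    rw [this, extJ_apply]
    simp [piW_jW, evS_inS]
  · intro i _
    rw [Matrix.cons_val_succ, jW_single_zero, zero_smul, smul_zero]

/-- Reduction modulo the zeroth variable splits `D^(p+1)` of the family in `ℓ + 1` variables as
`D^(p+1) ⊕ D^p` of the family in `ℓ` variables; `extJ` and `extC` provide the preimages. -/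
lemma map_res (p d : ℕ) :
    (polyDerGr (fun i => jW (φ i)) m s (p + 1) d).map ((resJ (p + 1)).prod (resC p)) =
      (polyDerGr φ m s (p + 1) d).prod (polyDerGr φ m s p d) := by
  ext ⟨η₁, η₂⟩
  constructor
  · rintro ⟨θ, hθ, h⟩
    rw [← h]
    exact ⟨resJ_mem φ m s hθ, resC_mem φ m s hθ⟩
  · rintro ⟨h1, h2⟩
    refine ⟨extJ _ η₁ + extC p η₂, add_mem (extJ_mem φ m s h1) (extC_mem φ m s h2), ?_⟩
    change (resJ _ _, resC _ _) = _
    rw [map_add, map_add, resJ_extJ, resJ_extC, resC_extJ, resC_extC,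
      add_zero, zero_add]

lemma map_res_zero (d : ℕ) :
    (polyDerGr (fun i => jW (φ i)) m s 0 d).map (resJ 0) = polyDerGr φ m s 0 d := by
  ext η
  constructor
  · rintro ⟨θ, hθ, h⟩
    rw [← h]
    exact resJ_mem φ m s hθ
  · intro h
    exact ⟨extJ _ η, extJ_mem φ m s h, resJ_extJ η⟩

lemma finrank_submodule_prod {V W : Type*} [AddCommGroup V] [Module K V] [AddCommGroup W]
    [Module K W] (P : Submodule K V) (Q : Submodule K W) [Module.Finite K P] [Module.Finite K Q] :
    Module.finrank K (P.prod Q) = Module.finrank K P + Module.finrank K Q := by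
  rw [← Module.finrank_prod]
  have h := LinearMap.finrank_range_of_inj
    (f := LinearMap.prodMap P.subtype Q.subtype)
    (Prod.map_injective.mpr ⟨Subtype.val_injective, Subtype.val_injective⟩)
  rw [LinearMap.range_prodMap, Submodule.range_subtype, Submodule.range_subtype] at h
  exact h

lemma finrank_polyDerGr_of_lt {p : ℕ} (hp : ℓ < p) (d : ℕ) :
    Module.finrank K (polyDerGr φ m s p d) = 0 := by
  have : Subsingleton (AltF K ℓ p) := by
    refine ⟨fun θ η => AltF.ext_coord fun u => ?_⟩
    obtain ⟨i, j, hij, h⟩ := Fintype.exists_ne_map_eq_of_card_lt u (by simpa using hp)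
    rw [θ.map_eq_zero_of_eq _ (by rw [h]) hij, η.map_eq_zero_of_eq _ (by rw [h]) hij]
  exact Module.finrank_zero_of_subsingleton

variable [Fintype ι]

lemma cubeDim_split_zero_zero : cubeDim (fun i => jW (φ i)) m 0 0 = cubeDim φ m 0 0 := by
  refine Finset.sum_congr rfl fun B _ => ?_
  rw [(finrank_split (resJ 0) res_zero_eq_zero_iff φ m B).1, map_res_zero]

lemma cubeDim_split_zero_succ (d : ℕ) : cubeDim (fun i => jW (φ i)) m 0 (d + 1) =
    cubeDim φ m 0 (d + 1) + cubeDim (fun i => jW (φ i)) m 0 d := by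
  simp only [cubeDim, ← Finset.sum_add_distrib, ← mul_add]
  refine Finset.sum_congr rfl fun B _ => ?_
  rw [(finrank_split (resJ 0) res_zero_eq_zero_iff φ m B).2, map_res_zero, Nat.cast_add]

lemma cubeDim_split_succ_zero (p : ℕ) : cubeDim (fun i => jW (φ i)) m (p + 1) 0 =
    cubeDim φ m (p + 1) 0 + cubeDim φ m p 0 := by
  simp only [cubeDim, ← Finset.sum_add_distrib, ← mul_add]
  refine Finset.sum_congr rfl fun B _ => ?_
  rw [(finrank_split _ res_eq_zero_iff φ m B).1, map_res, finrank_submodule_prod, Nat.cast_add]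

lemma cubeDim_split_succ_succ (p d : ℕ) : cubeDim (fun i => jW (φ i)) m (p + 1) (d + 1) =
    cubeDim φ m (p + 1) (d + 1) + cubeDim φ m p (d + 1) +
      cubeDim (fun i => jW (φ i)) m (p + 1) d := by
  simp only [cubeDim, ← Finset.sum_add_distrib, ← mul_add]
  refine Finset.sum_congr rfl fun B _ => ?_
  rw [(finrank_split _ res_eq_zero_iff φ m B).2, map_res, finrank_submodule_prod, Nat.cast_add,
    Nat.cast_add]

lemma cubeDim_of_lt {p : ℕ} (hp : ℓ < p) (d : ℕ) : cubeDim φ m p d = 0 :=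
  Finset.sum_eq_zero fun B _ => by rw [finrank_polyDerGr_of_lt φ m B hp, Nat.cast_zero, mul_zero]

end Restriction

/-! ### Generating series -/

section Gamma

variable {ι : Type*} [Fintype ι]

/-- The generating series of `cubeDim`. -/
def cubeSer (φ : ι → Module.Dual K (Fin ℓ → K)) (m : ι → ℕ) (p : ℕ) : PowerSeries ℤ :=
  PowerSeries.mk (cubeDim φ m p)

/-- The Möbius-inverted analogue of `psi`. -/
def cubePsi (φ : ι → Module.Dual K (Fin ℓ → K)) (m : ι → ℕ) : Polynomial (PowerSeries ℤ) :=
  ∑ p ∈ Finset.range (ℓ + 1), Polynomial.C (cubeSer φ m p) *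
    (Polynomial.C ((PowerSeries.X : PowerSeries ℤ) - 1) * Polynomial.X - 1) ^ p

lemma cubeSer_split_zero (φ : ι → Module.Dual K (Fin ℓ → K)) (m : ι → ℕ) :
    cubeSer (fun i => jW (φ i)) m 0 * (1 - PowerSeries.X) = cubeSer φ m 0 := by
  ext d
  rw [mul_sub, mul_one, map_sub]
  cases d with
  | zero =>
    rw [PowerSeries.coeff_zero_mul_X, sub_zero]
    simp only [cubeSer, PowerSeries.coeff_mk]
    exact cubeDim_split_zero_zero φ m
  | succ d =>
    rw [PowerSeries.coeff_succ_mul_X, sub_eq_iff_eq_add]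
    simp only [cubeSer, PowerSeries.coeff_mk]
    exact cubeDim_split_zero_succ φ m d

lemma cubeSer_split_succ (φ : ι → Module.Dual K (Fin ℓ → K)) (m : ι → ℕ) (p : ℕ) :
    cubeSer (fun i => jW (φ i)) m (p + 1) * (1 - PowerSeries.X) =
      cubeSer φ m (p + 1) + cubeSer φ m p := by
  ext d
  rw [mul_sub, mul_one, map_sub, map_add]
  cases d with
  | zero =>
    rw [PowerSeries.coeff_zero_mul_X, sub_zero]
    simp only [cubeSer, PowerSeries.coeff_mk]
    exact cubeDim_split_succ_zero φ m p
  | succ d =>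
    rw [PowerSeries.coeff_succ_mul_X, sub_eq_iff_eq_add]
    simp only [cubeSer, PowerSeries.coeff_mk]
    exact cubeDim_split_succ_succ φ m p d

lemma cubeSer_of_lt (φ : ι → Module.Dual K (Fin ℓ → K)) (m : ι → ℕ) {p : ℕ} (hp : ℓ < p) :
    cubeSer φ m p = 0 := by
  ext d
  simp [cubeSer, cubeDim_of_lt φ m hp]

/-- The recursion satisfied by the generating series under adding a variable, summed against powers
of `w`. -/
lemma sum_split {R : Type*} [CommRing R] (H H' : ℕ → R) (x w : R) (h0 : x * H 0 = H' 0)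
    (h1 : ∀ p, x * H (p + 1) = H' (p + 1) + H' p) (n : ℕ) :
    x * ∑ p ∈ Finset.range (n + 1), H p * w ^ p =
      ∑ p ∈ Finset.range (n + 1), H' p * w ^ p + w * ∑ p ∈ Finset.range n, H' p * w ^ p := by
  induction n with
  | zero => simp [h0]
  | succ n ih =>
    rw [Finset.sum_range_succ, mul_add, ih, Finset.sum_range_succ _ (n + 1), ← mul_assoc, h1,
      Finset.sum_range_succ _ n]
    ring

/-- Adding a variable on which no form depends multiplies `cubePsi` by `-t`. -/
lemma cubePsi_jW (φ : ι → Module.Dual K (Fin ℓ → K)) (m : ι → ℕ) :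
    cubePsi (fun i => jW (φ i)) m = -(Polynomial.X * cubePsi φ m) := by
  have hne : Polynomial.C (1 - PowerSeries.X : PowerSeries ℤ) ≠ 0 := by
    rw [Ne, Polynomial.C_eq_zero, sub_eq_zero]
    intro h
    have := congrArg (PowerSeries.coeff 0) h
    simp at this
  refine mul_left_cancel₀ hne ?_
  set w : Polynomial (PowerSeries ℤ) :=
    Polynomial.C ((PowerSeries.X : PowerSeries ℤ) - 1) * Polynomial.X - 1 with hw
  have h1 : Polynomial.C (1 - PowerSeries.X : PowerSeries ℤ) * cubePsi (fun i => jW (φ i)) m =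
      cubePsi φ m + w * cubePsi φ m := by
    have := sum_split (fun p => Polynomial.C (cubeSer (fun i => jW (φ i)) m p))
      (fun p => Polynomial.C (cubeSer φ m p)) (Polynomial.C (1 - PowerSeries.X)) w
      (by rw [← map_mul, mul_comm, cubeSer_split_zero])
      (fun p => by rw [← map_mul, mul_comm, cubeSer_split_succ, map_add]) (ℓ + 1)
    rw [Finset.sum_range_succ (fun p => Polynomial.C (cubeSer φ m p) * w ^ p),
      cubeSer_of_lt φ m (Nat.lt_succ_self ℓ), map_zero, zero_mul, add_zero] at this
    exact this
  have key : ∀ a x y : Polynomial (PowerSeries ℤ),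
      y + ((a - 1) * x - 1) * y = (1 - a) * -(x * y) := fun a x y => by ring
  rw [h1, hw, Polynomial.C_sub, Polynomial.C_sub, Polynomial.C_1, key]

lemma iInf_ker_comp {V W : Type*} [AddCommGroup V] [Module K V] [AddCommGroup W] [Module K W]
    {κ : Type*} (φ : κ → Module.Dual K W) (f : V →ₗ[K] W) :
    ⨅ i, LinearMap.ker (φ i ∘ₗ f) = (⨅ i, LinearMap.ker (φ i)).comap f := by
  ext x
  simp [Submodule.mem_iInf]

lemma finrank_comap_dropZero (T : Submodule K (Fin ℓ → K)) :
    Module.finrank K (T.comap (dropZero K ℓ)) = Module.finrank K T + 1 := by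
  have hs : Function.Surjective (dropZero K ℓ) := fun x =>
    ⟨consZero K ℓ x, LinearMap.congr_fun dropZero_comp_consZero x⟩
  rw [← finrank_map_add_inf_ker (dropZero K ℓ), Submodule.map_comap_eq_of_surjective hs]
  have h1 : LinearMap.ker (dropZero K ℓ) ⊓ T.comap (dropZero K ℓ) = LinearMap.ker (dropZero K ℓ) :=
    inf_eq_left.mpr (LinearMap.ker_le_comap _)
  have h2 := LinearMap.finrank_range_add_finrank_ker (dropZero K ℓ)
  rw [LinearMap.range_eq_top.mpr hs, finrank_top, Module.finrank_fin_fun, Module.finrank_fin_fun]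
    at h2
  rw [h1]
  omega

lemma exists_equiv_single_zero {v : Fin (ℓ + 1) → K} (hv : v ≠ 0) :
    ∃ g : (Fin (ℓ + 1) → K) ≃ₗ[K] (Fin (ℓ + 1) → K), g (Pi.single 0 1) = v := by
  have he : (Pi.single 0 1 : Fin (ℓ + 1) → K) ≠ 0 := by
    intro h
    simpa using congrFun h 0
  obtain ⟨g, hg⟩ := Submodule.exists_linearEquiv_restrict_eq
    ((LinearEquiv.toSpanNonzeroSingleton K _ _ he).symm.trans
      (LinearEquiv.toSpanNonzeroSingleton K _ _ hv))
  refine ⟨g, ?_⟩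
  have := hg ⟨_, Submodule.mem_span_singleton_self _⟩
  rw [← this, LinearEquiv.trans_apply]
  have h1 : (LinearEquiv.toSpanNonzeroSingleton K _ _ he).symm
      ⟨_, Submodule.mem_span_singleton_self _⟩ = 1 := by
    rw [LinearEquiv.symm_apply_eq, LinearEquiv.toSpanNonzeroSingleton_one]
  rw [h1, LinearEquiv.toSpanNonzeroSingleton_one]

lemma jW_piW_of_single {φ : Module.Dual K (Fin (ℓ + 1) → K)} (h : φ (Pi.single 0 1) = 0) :
    jW (piW φ) = φ := by
  refine LinearMap.ext fun x => ?_
  have : x = x 0 • Pi.single 0 1 + consZero K ℓ (dropZero K ℓ x) := by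
    ext i
    refine Fin.cases ?_ (fun i => ?_) i <;> simp [consZero, dropZero, LinearMap.funLeft]
  conv_rhs => rw [this, map_add, map_smul, h, smul_zero, zero_add]
  rfl

/-- In the essential case all `cubeSer` are polynomials in `q`, so that `q = 1` may be substituted, and
then `t (q - 1) - 1` becomes `-1`: only the constant term in `t` survives. -/
lemma cubePsi_monomial_of_bot (φ : ι → Module.Dual K (Fin ℓ → K)) (m : ι → ℕ)
    (h0 : ⨅ i, LinearMap.ker (φ i) = ⊥) :
    ∃ Q : Polynomial (Polynomial ℤ),
      Q.map Polynomial.coeToPowerSeries.ringHom = cubePsi φ m ∧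
      ∀ k, k ≠ 0 → (Q.coeff k).eval 1 = 0 := by
  have hf : ∀ p, ∃ f : Polynomial ℤ, Polynomial.coeToPowerSeries.ringHom f = cubeSer φ m p := by
    intro p
    obtain ⟨N, hN⟩ := cubeDim_eventually_zero φ m p h0
    refine ⟨(cubeSer φ m p).trunc N, ?_⟩
    ext d
    rw [Polynomial.coeToPowerSeries.ringHom_apply, Polynomial.coeff_coe, PowerSeries.coeff_trunc]
    split_ifs with h
    · rfl
    · rw [cubeSer, PowerSeries.coeff_mk, hN d (not_lt.mp h)]
  choose f hf using hf
  refine ⟨∑ p ∈ Finset.range (ℓ + 1), Polynomial.C (f p) *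
    (Polynomial.C ((Polynomial.X : Polynomial ℤ) - 1) * Polynomial.X - 1) ^ p, ?_, ?_⟩
  · rw [cubePsi, Polynomial.map_sum]
    refine Finset.sum_congr rfl fun p _ => ?_
    simp [← hf]
  · intro k hk
    have h1 : ((∑ p ∈ Finset.range (ℓ + 1), Polynomial.C (f p) *
        (Polynomial.C ((Polynomial.X : Polynomial ℤ) - 1) * Polynomial.X - 1) ^ p).map
        (Polynomial.evalRingHom 1)) =
        Polynomial.C (∑ p ∈ Finset.range (ℓ + 1), (f p).eval 1 * (-1) ^ p) := by
      rw [Polynomial.map_sum, map_sum]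
      refine Finset.sum_congr rfl fun p _ => ?_
      simp
    have h2 := congrArg (fun P => Polynomial.coeff P k) h1
    simp only [Polynomial.coeff_map, Polynomial.coeff_C, if_neg hk] at h2
    exact h2

/-- The value of `cubePsi` at `q = 1` makes sense and is a monomial in `t`, whose exponent is the
dimension of the common kernel. A nonzero vector in the common kernel is moved to the zeroth basis
vector, after which the forms do not involve the zeroth variable. -/
lemma cubePsi_monomial (φ : ι → Module.Dual K (Fin ℓ → K)) (m : ι → ℕ) :
    ∃ Q : Polynomial (Polynomial ℤ),
      Q.map Polynomial.coeToPowerSeries.ringHom = cubePsi φ m ∧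
      ∀ k, k ≠ Module.finrank K (⨅ i, LinearMap.ker (φ i) : Submodule K (Fin ℓ → K)) →
        (Q.coeff k).eval 1 = 0 := by
  by_cases h0 : ⨅ i, LinearMap.ker (φ i) = ⊥
  · rw [h0, finrank_bot]
    exact cubePsi_monomial_of_bot φ m h0
  induction ℓ with
  | zero => exact absurd (Subsingleton.elim _ _) h0
  | succ ℓ ih =>
    obtain ⟨v, hv, hv0⟩ := Submodule.exists_mem_ne_zero_of_ne_bot h0
    obtain ⟨g, hg⟩ := exists_equiv_single_zero hv0
    have hφ' : (fun i => jW (piW (φ i ∘ₗ g.toLinearMap))) = fun i => φ i ∘ₗ g.toLinearMap := by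
      funext i
      refine jW_piW_of_single ?_
      have := (Submodule.mem_iInf _).mp hv i
      rw [LinearMap.comp_apply, LinearEquiv.coe_coe, hg]
      exact this
    set φ' : ι → Module.Dual K (Fin ℓ → K) := fun i => piW (φ i ∘ₗ g.toLinearMap) with hφdef
    obtain ⟨Q, hQ, hQ1⟩ : ∃ Q : Polynomial (Polynomial ℤ),
        Q.map Polynomial.coeToPowerSeries.ringHom = cubePsi φ' m ∧
        ∀ k, k ≠ Module.finrank K (⨅ i, LinearMap.ker (φ' i) : Submodule K (Fin ℓ → K)) →
          (Q.coeff k).eval 1 = 0 := by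
      by_cases h1 : ⨅ i, LinearMap.ker (φ' i) = ⊥
      · rw [h1, finrank_bot]
        exact cubePsi_monomial_of_bot φ' m h1
      · exact ih φ' h1
    have hpsi : cubePsi φ m = -(Polynomial.X * cubePsi φ' m) := by
      rw [← cubePsi_jW, hφ']
      simp only [cubePsi, cubeSer]
      refine Finset.sum_congr rfl fun p _ => ?_
      congr 3
      funext d
      exact Finset.sum_congr rfl fun B _ => by rw [finrank_polyDerGr_equiv]
    have hrank : Module.finrank K (⨅ i, LinearMap.ker (φ i) : Submodule K (Fin (ℓ + 1) → K)) =
        Module.finrank K (⨅ i, LinearMap.ker (φ' i) : Submodule K (Fin ℓ → K)) + 1 := by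
      rw [← finrank_comap_dropZero, ← iInf_ker_comp]
      have : (fun i => φ' i ∘ₗ dropZero K ℓ) = fun i => φ i ∘ₗ g.toLinearMap := hφ'
      rw [iInf_congr fun i => congrArg LinearMap.ker (congrFun this i), iInf_ker_comp]
      exact (LinearEquiv.finrank_map_eq g.symm _).symm.trans (by
        rw [← Submodule.comap_equiv_eq_map_symm])
    refine ⟨-(Polynomial.X * Q), ?_, fun k hk => ?_⟩
    · rw [hpsi, ← hQ, Polynomial.map_neg, Polynomial.map_mul, Polynomial.map_X]
    · rw [hrank] at hk
      cases k with
      | zero => simp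
      | succ k =>
        rw [Polynomial.coeff_neg, Polynomial.coeff_X_mul, Polynomial.eval_neg, hQ1 k (by omega),
          neg_zero]

end Gamma

/-! ### Multiderivations and alternating forms -/

section Bridge

/-- A multiderivation takes values in an ideal as soon as it does so after replacing the entries
indexed by `t` by arbitrary variables. -/
lemma IsMultiDer.mem_of_forall_X {p : ℕ}
    {θ : (MvPolynomial (Fin ℓ) K) [⋀^Fin p]→ₗ[K] (MvPolynomial (Fin ℓ) K)} (hθ : IsMultiDer θ)
    (I : Ideal (MvPolynomial (Fin ℓ) K)) (t : Finset (Fin p)) :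
    ∀ v : Fin p → MvPolynomial (Fin ℓ) K,
      (∀ v' : Fin p → MvPolynomial (Fin ℓ) K, (∀ j ∉ t, v' j = v j) →
        (∀ j ∈ t, ∃ k, v' j = X k) → θ v' ∈ I) → θ v ∈ I := by
  induction t using Finset.induction_on with
  | empty => exact fun v H => H v (fun _ _ => rfl) (fun j hj => absurd hj (Finset.notMem_empty j))
  | insert a t ha ih =>
    intro v H
    have h1 : θ (Function.update v a 1) = 0 := by
      have := hθ a v 1 1
      rw [one_mul, one_mul] at this
      exact left_eq_add.mp this
    have hX : ∀ k, θ (Function.update v a (X k)) ∈ I := by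
      intro k
      refine ih _ fun v' hv hv' => H v' (fun j hj => ?_) (fun j hj => ?_)
      · rw [Finset.mem_insert, not_or] at hj
        rw [hv j hj.2, Function.update_of_ne hj.1]
      · rcases Finset.mem_insert.mp hj with rfl | hj
        · exact ⟨k, by rw [hv _ ha, Function.update_self]⟩
        · exact hv' j hj
    have key : ∀ f, θ (Function.update v a f) ∈ I := by
      intro f
      induction f using MvPolynomial.induction_on with
      | C c =>
        rw [← mul_one (C c), ← MvPolynomial.smul_eq_C_mul, AlternatingMap.map_update_smul, h1,
          smul_zero]
        exact zero_mem _
      | add f g hf hg =>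
        rw [AlternatingMap.map_update_add]
        exact add_mem hf hg
      | mul_X f k hf =>
        rw [hθ]
        exact add_mem (Ideal.mul_mem_left _ _ (hX k)) (Ideal.mul_mem_left _ _ hf)
    simpa using key (v a)

/-- A multiderivation vanishing on the variables is zero. -/
lemma IsMultiDer.eq_zero {p : ℕ}
    {θ : (MvPolynomial (Fin ℓ) K) [⋀^Fin p]→ₗ[K] (MvPolynomial (Fin ℓ) K)} (hθ : IsMultiDer θ)
    (h : ∀ u : Fin p → Fin ℓ, θ (fun j => X (u j)) = 0) : θ = 0 := by
  ext1 v
  have := hθ.mem_of_forall_X ⊥ Finset.univ v fun v' _ hv' => by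
    choose u hu using fun j => hv' j (Finset.mem_univ j)
    rw [funext hu, h]
    exact zero_mem _
  exact this

/-- The `p`-derivation with prescribed values on linear forms, written out as a combination of
products of partial derivatives. -/
def derExt {p : ℕ} (η : AltF K ℓ p) :
    (MvPolynomial (Fin ℓ) K) [⋀^Fin p]→ₗ[K] (MvPolynomial (Fin ℓ) K) :=
  { (∑ u : Fin p → Fin ℓ,
      (LinearMap.mulRight K (η fun j => coordBasis K ℓ (u j))).compMultilinearMap
      ((MultilinearMap.mkPiAlgebra K (Fin p) (MvPolynomial (Fin ℓ) K)).compLinearMap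
        fun j => (pderiv (u j)).toLinearMap)) with
    map_eq_zero_of_eq' := by
      intro v a b hv hab
      change (∑ u : Fin p → Fin ℓ, _ : MultilinearMap K _ _) v = 0
      rw [sum_apply]
      have hsw : ∀ j, v (Equiv.swap a b j) = v j := by
        intro j
        by_cases h1 : j = a
        · rw [h1, Equiv.swap_apply_left, hv]
        · by_cases h2 : j = b
          · rw [h2, Equiv.swap_apply_right, hv]
          · rw [Equiv.swap_apply_of_ne_of_ne h1 h2]
      refine Finset.sum_involution (fun u _ => u ∘ Equiv.swap a b) ?_ ?_ ?_ ?_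
      · intro u _
        have e1 : η (fun j => coordBasis K ℓ ((u ∘ Equiv.swap a b) j)) =
            -η (fun j => coordBasis K ℓ (u j)) := η.map_swap (fun j => coordBasis K ℓ (u j)) hab
        have e2 : ∏ j, pderiv ((u ∘ Equiv.swap a b) j) (v j) = ∏ j, pderiv (u j) (v j) := by
          rw [← Equiv.prod_comp (Equiv.swap a b)]
          refine Finset.prod_congr rfl fun j _ => ?_
          rw [hsw, Function.comp_apply, Equiv.swap_apply_self]
        change (∏ j, pderiv (u j) (v j)) * η (fun j => coordBasis K ℓ (u j)) +
          (∏ j, pderiv ((u ∘ Equiv.swap a b) j) (v j)) *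
            η (fun j => coordBasis K ℓ ((u ∘ Equiv.swap a b) j)) = 0
        rw [e1, e2]
        ring
      · intro u _ hu h
        apply hu
        have hab' : u a = u b := by
          have := congrFun h b
          rwa [Function.comp_apply, Equiv.swap_apply_right] at this
        change (∏ j, pderiv (u j) (v j)) * η (fun j => coordBasis K ℓ (u j)) = 0
        rw [η.map_eq_zero_of_eq _ (by rw [hab']) hab, mul_zero]
      · intro u _; exact Finset.mem_univ _
      · intro u _
        funext j
        simp }

lemma derExt_apply {p : ℕ} (η : AltF K ℓ p) (v) : derExt η v =
    ∑ u : Fin p → Fin ℓ, (∏ j, pderiv (u j) (v j)) * η fun j => coordBasis K ℓ (u j) := by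
  change (∑ u : Fin p → Fin ℓ, _ : MultilinearMap K _ _) v = _
  rw [sum_apply]
  rfl

lemma derExt_isMultiDer {p : ℕ} (η : AltF K ℓ p) : IsMultiDer (derExt η) := by
  intro i v f g
  rw [derExt_apply, derExt_apply, derExt_apply, Finset.mul_sum, Finset.mul_sum,
    ← Finset.sum_add_distrib]
  refine Finset.sum_congr rfl fun u _ => ?_
  have h : ∀ f, ∏ j, pderiv (u j) (Function.update v i f j) =
      pderiv (u i) f * ∏ j ∈ Finset.univ \ {i}, pderiv (u j) (v j) := by
    intro f
    rw [← Finset.prod_update_of_mem (Finset.mem_univ i)]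
    refine Finset.prod_congr rfl fun j _ => ?_
    exact Function.apply_update (fun j => pderiv (u j)) v i f j
  rw [h, h, h, Derivation.leibniz, smul_eq_mul, smul_eq_mul]
  ring

lemma derExt_formPoly {p : ℕ} (η : AltF K ℓ p) (w : Fin p → Module.Dual K (Fin ℓ → K)) :
    derExt η (fun j => formPoly (w j)) = η w := by
  have : (derExt η).compLinearMap (formPolyLin K ℓ) = η := by
    refine AltF.ext_coord fun u₀ => ?_
    rw [AlternatingMap.compLinearMap_apply, derExt_apply, Finset.sum_eq_single u₀]
    · simp [formPolyLin_apply, formPoly_coordBasis]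
    · intro u _ hu
      obtain ⟨j, hj⟩ := Function.ne_iff.mp hu
      rw [Finset.prod_eq_zero (Finset.mem_univ j), zero_mul]
      rw [formPolyLin_apply, formPoly_coordBasis, pderiv_X_of_ne hj.symm]
    · intro h; exact absurd (Finset.mem_univ _) h
  exact congrArg (fun τ : AltF K ℓ p => τ w) this

lemma AltF.isHomogeneous_of_coord {p d : ℕ} (η : AltF K ℓ p)
    (h : ∀ u : Fin p → Fin ℓ, (η fun j => coordBasis K ℓ (u j)).IsHomogeneous d) (w) :
    (η w).IsHomogeneous d := by
  have : altComp d η = η := AltF.ext_coord fun u => homogeneousComponent_eq_self (h u)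
  rw [← this]
  exact homogeneousComponent_isHomogeneous _ _

/-- Restriction to linear forms identifies the graded pieces of `D^p(A,m)` with those of the model by
alternating forms. -/
lemma finrank_DpGraded (A : MultiArr K ℓ) (p d : ℕ) :
    Module.finrank K (DpGraded A p d) = Module.finrank K (polyDerGr id A.mult A.duals p d) := by
  let R : ((MvPolynomial (Fin ℓ) K) [⋀^Fin p]→ₗ[K] (MvPolynomial (Fin ℓ) K)) →ₗ[K] AltF K ℓ p :=
    { toFun := fun θ => θ.compLinearMap (formPolyLin K ℓ)
      map_add' := fun _ _ => rfl
      map_smul' := fun _ _ => rfl }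
  have hR : ∀ θ w, R θ w = θ fun j => formPoly (w j) := fun _ _ => rfl
  have hX : ∀ u : Fin p → Fin ℓ, (fun j => (X (u j) : MvPolynomial (Fin ℓ) K)) =
      fun j => formPoly (coordBasis K ℓ (u j)) := fun u => by simp only [formPoly_coordBasis]
  have hmap : (DpGraded A p d).map R = polyDerGr id A.mult A.duals p d := by
    ext η
    constructor
    · rintro ⟨θ, ⟨⟨h1, h2⟩, h3⟩, rfl⟩
      refine ⟨fun φ hφ w j hw => h2 φ hφ _ j (by rw [hw]; rfl), ?_⟩
      refine AltF.isHomogeneous_of_coord _ fun u => ?_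
      rw [hR, ← hX]
      exact h3 u
    · rintro ⟨h1, h2⟩
      refine ⟨derExt η, ⟨⟨derExt_isMultiDer η, ?_⟩, ?_⟩, ?_⟩
      · intro φ hφ v i hv
        refine (derExt_isMultiDer η).mem_of_forall_X _ (Finset.univ.erase i) v fun v' hv1 hv2 => ?_
        have : ∀ j, ∃ w : Module.Dual K (Fin ℓ → K), v' j = formPoly w ∧ (j = i → w = φ) := by
          intro j
          by_cases hj : j = i
          · exact ⟨φ, by rw [hv1 j (by simp [hj]), hj, hv], fun _ => rfl⟩
          · obtain ⟨k, hk⟩ := hv2 j (by simp [hj])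
            exact ⟨coordBasis K ℓ k, by rw [hk, formPoly_coordBasis], fun h => absurd h hj⟩
        choose w hw hwi using this
        rw [funext hw, derExt_formPoly]
        exact h1 φ hφ w i (hwi i rfl)
      · intro u
        rw [hX, derExt_formPoly]
        exact h2 _
      · ext1 w
        rw [hR, derExt_formPoly]
  rw [← hmap]
  have hinj : Function.Injective (R.domRestrict (DpGraded A p d)) := by
    rw [injective_iff_map_eq_zero]
    rintro ⟨θ, hθ⟩ h
    refine Subtype.ext (hθ.1.1.eq_zero fun u => ?_)
    rw [hX, ← hR]
    exact congrArg (fun τ : AltF K ℓ p => τ fun j => coordBasis K ℓ (u j)) h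
  rw [← LinearMap.finrank_range_of_inj hinj, LinearMap.range_domRestrict]

end Bridge

/-! ### Möbius inversion and summation over flats -/

section Moebius

/-- Möbius inversion on the Boolean lattice, with the signs distributed symmetrically. -/
lemma sum_powerset_moebius {α : Type*} (s : Finset α) : ∀ h : Finset α → ℤ,
    ∑ B ∈ s.powerset, (-1 : ℤ) ^ B.card * ∑ C ∈ B.powerset, (-1 : ℤ) ^ C.card * h C = h s := by
  induction s using Finset.induction_on with
  | empty => intro h; simp
  | insert a s ha ih =>
    intro h
    rw [Finset.sum_powerset_insert ha, ← Finset.sum_add_distrib, ← ih fun C => h (insert a C)]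
    refine Finset.sum_congr rfl fun B hB => ?_
    have haB : a ∉ B := fun h => ha (Finset.mem_powerset.mp hB h)
    have e : ∑ C ∈ B.powerset, (-1 : ℤ) ^ (insert a C).card * h (insert a C) =
        -∑ C ∈ B.powerset, (-1 : ℤ) ^ C.card * h (insert a C) := by
      rw [← Finset.sum_neg_distrib]
      refine Finset.sum_congr rfl fun C hC => ?_
      rw [Finset.card_insert_of_notMem fun h => haB (Finset.mem_powerset.mp hC h), pow_succ]
      ring
    rw [Finset.sum_powerset_insert haB, Finset.card_insert_of_notMem haB, e, pow_succ]
    ring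

/-- The Möbius-inverted `psi` of the subarrangement `B`, up to the sign `(-1) ^ B.card`. -/
abbrev subPsi (m : Module.Dual K (Fin ℓ → K) → ℕ) (B : Finset (Module.Dual K (Fin ℓ → K))) :
    Polynomial (PowerSeries ℤ) :=
  cubePsi (fun i : B => i.1) (fun i : B => m i.1)

lemma cubeDim_sub (m : Module.Dual K (Fin ℓ → K) → ℕ) (B : Finset (Module.Dual K (Fin ℓ → K)))
    (p d : ℕ) : cubeDim (fun i : B => i.1) (fun i : B => m i.1) p d =
      ∑ C ∈ B.powerset, (-1 : ℤ) ^ C.card * (Module.finrank K (polyDerGr id m C p d) : ℤ) := by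
  rw [cubeDim]
  refine Finset.sum_bij (fun C _ => C.map (Function.Embedding.subtype _)) ?_ ?_ ?_ ?_
  · intro C _
    rw [Finset.mem_powerset]
    intro x hx
    obtain ⟨y, _, rfl⟩ := Finset.mem_map.mp hx
    exact y.2
  · intro C _ C' _ h
    exact Finset.map_injective _ h
  · intro C hC
    refine ⟨C.subtype (· ∈ B), Finset.mem_univ _, ?_⟩
    exact Finset.subtype_map_of_mem (Finset.mem_powerset.mp hC)
  · intro C _
    have : polyDerGr (fun i : B => i.1) (fun i : B => m i.1) C p d =
        polyDerGr id m (C.map (Function.Embedding.subtype _)) p d := by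
      ext θ
      refine and_congr_left fun _ => ?_
      constructor
      · intro h φ hφ w j hw
        obtain ⟨y, hy, rfl⟩ := Finset.mem_map.mp hφ
        exact h y hy w j hw
      · intro h i hi w j hw
        exact h i.1 (Finset.mem_map_of_mem _ hi) w j hw
    rw [Finset.card_map, this]

/-- `psi` is the sum of the local contributions of all subsets of the arrangement. -/
lemma psi_eq_sum (A : MultiArr K ℓ) :
    psi A = ∑ B ∈ A.duals.powerset, (-1 : ℤ) ^ B.card • subPsi A.mult B := by
  have h : ∀ p, hilb A p = ∑ B ∈ A.duals.powerset,
      (-1 : ℤ) ^ B.card • cubeSer (fun i : B => i.1) (fun i : B => A.mult i.1) p := by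
    intro p
    ext d
    simp only [hilb, PowerSeries.coeff_mk, map_sum, map_zsmul, cubeSer, smul_eq_mul, cubeDim_sub]
    rw [sum_powerset_moebius A.duals fun C => (Module.finrank K (polyDerGr id A.mult C p d) : ℤ),
      finrank_DpGraded]
  simp only [psi, subPsi, cubePsi, h, map_sum, Finset.sum_mul, Finset.smul_sum]
  rw [Finset.sum_comm]
  refine Finset.sum_congr rfl fun B _ => Finset.sum_congr rfl fun p _ => ?_
  rw [← smul_mul_assoc]
  congr 1
  exact map_zsmul (Polynomial.C : PowerSeries ℤ →+* _) _ _

/-- The value `ψ(t,1)` is a sum of local contributions, one for each subset of the arrangement,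
each of them a monomial in `t` of exponent the dimension of the corresponding intersection. -/
lemma exists_local (m : Module.Dual K (Fin ℓ → K) → ℕ) :
    ∃ c : Finset (Module.Dual K (Fin ℓ → K)) → ℕ → ℤ,
      (∀ B k, k ≠ Module.finrank K (⨅ φ ∈ B, LinearMap.ker φ : Submodule K (Fin ℓ → K)) →
        c B k = 0) ∧
      ∀ A : MultiArr K ℓ, A.mult = m → ∀ k, psiAtOne A k = ∑ B ∈ A.duals.powerset, c B k := by
  choose Q hQ hQ1 using fun B : Finset (Module.Dual K (Fin ℓ → K)) =>
    cubePsi_monomial (fun i : B => i.1) (fun i : B => m i.1)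
  refine ⟨fun B k => (-1 : ℤ) ^ B.card * ((Q B).coeff k).eval 1, fun B k hk => ?_, ?_⟩
  · have := hQ1 B k (by rwa [iInf_subtype])
    beta_reduce
    rw [this, mul_zero]
  · rintro A rfl k
    have h : Polynomial.coeToPowerSeries.ringHom
        (∑ B ∈ A.duals.powerset, (-1 : ℤ) ^ B.card • (Q B).coeff k) = (psi A).coeff k := by
      rw [psi_eq_sum, Polynomial.finsetSum_coeff, map_sum]
      refine Finset.sum_congr rfl fun B _ => ?_
      rw [map_zsmul, Polynomial.coeff_smul, ← Polynomial.coeff_map, hQ]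
    have hex : ∃ f : Polynomial ℤ, Polynomial.coeToPowerSeries.ringHom f = (psi A).coeff k := ⟨_, h⟩
    have h2 : psiQCoeff A k = ∑ B ∈ A.duals.powerset, (-1 : ℤ) ^ B.card • (Q B).coeff k := by
      rw [psiQCoeff, dif_pos hex]
      exact Polynomial.coe_injective ℤ (hex.choose_spec.trans h.symm)
    rw [psiAtOne, h2, Polynomial.eval_finsetSum]
    refine Finset.sum_congr rfl fun B _ => ?_
    rw [Polynomial.eval_smul, smul_eq_mul]

/-- Grouping the subsets `B` contributing in degree `ℓ - p` according to their intersection, which is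
a flat `Y` of rank `p`; the subsets with intersection `Y` also account for everything that the
subarrangement at `Y` contributes in this degree. -/
lemma sum_flats (A : MultiArr K ℓ) (c : Finset (Module.Dual K (Fin ℓ → K)) → ℕ → ℤ)
    (hc : ∀ B k, k ≠ Module.finrank K (⨅ φ ∈ B, LinearMap.ker φ : Submodule K (Fin ℓ → K)) →
      c B k = 0) {p : ℕ} (hp : p ≤ ℓ) :
    ∑ B ∈ A.duals.powerset, c B (ℓ - p) = ∑ Y ∈ (LSet A).filter (fun Y => rk Y = p),
      ∑ B ∈ (restrictArr A Y).duals.powerset, c B (ℓ - p) := by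
  have hle : ∀ Y : Submodule K (Fin ℓ → K), Module.finrank K Y ≤ ℓ := fun Y => by
    simpa using Submodule.finrank_le Y
  have h1 : ∀ Y ∈ (LSet A).filter (fun Y => rk Y = p),
      ∑ B ∈ (restrictArr A Y).duals.powerset, c B (ℓ - p) =
      ∑ B ∈ A.duals.powerset, if ⨅ φ ∈ B, LinearMap.ker φ = Y then c B (ℓ - p) else 0 := by
    intro Y hY
    have hYp : rk Y = p := (Finset.mem_filter.mp hY).2
    have hYd : Module.finrank K Y = ℓ - p := by
      have := hle Y
      rw [rk] at hYp
      omega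
    have hsub : (restrictArr A Y).duals.powerset ⊆ A.duals.powerset :=
      Finset.powerset_mono.mpr (Finset.filter_subset _ _)
    refine (Finset.sum_congr rfl fun B hB => ?_).trans (Finset.sum_subset hsub fun B hB hB' => ?_)
    · split_ifs with h
      · rfl
      · refine hc _ _ fun h' => h ?_
        have hYB : Y ≤ ⨅ φ ∈ B, LinearMap.ker φ := le_iInf₂ fun φ hφ =>
          (Finset.mem_filter.mp (Finset.mem_powerset.mp hB hφ)).2
        exact (Submodule.eq_of_le_of_finrank_eq hYB (hYd.trans h')).symm
    · rw [if_neg]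
      rintro rfl
      exact hB' (Finset.mem_powerset.mpr fun φ hφ => Finset.mem_filter.mpr
        ⟨Finset.mem_powerset.mp hB hφ, iInf₂_le φ hφ⟩)
  rw [Finset.sum_congr rfl h1, Finset.sum_comm]
  refine Finset.sum_congr rfl fun B hB => ?_
  rw [Finset.sum_ite_eq]
  split_ifs with h
  · rfl
  · refine hc _ _ fun h' => h ?_
    refine Finset.mem_filter.mpr ⟨Finset.mem_image_of_mem _ hB, ?_⟩
    rw [rk, ← h']
    omega

end Moebius


/-- With `T = ∩_{H ∈ 𝒜} H` and `C_p` the coefficient of `t^p` in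
`π((𝒜,m),t)`, one has `C_p = Σ_{Y ∈ L_p} C_p(Y)` for every `0 ≤ p ≤ r(T)`. -/
theorem Cp_global (A : MultiArr K ℓ) :
    ∀ p : ℕ, p ≤ rk (⨅ φ ∈ A.duals, LinearMap.ker φ) →
      CpCoeff A p =
        ∑ Y ∈ (LSet A).filter (fun Y => rk Y = p), CpCoeff (restrictArr A Y) p := by
  intro p hp
  obtain ⟨c, hc, hA⟩ := exists_local A.mult
  have hpl : p ≤ ℓ := hp.trans (Nat.sub_le _ _)
  simp only [CpCoeff]
  rw [← Finset.mul_sum, hA A rfl, sum_flats A c hc hpl]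
  congr 1
  exact Finset.sum_congr rfl fun Y _ => (hA (restrictArr A Y) rfl _).symm
end
end

section
/- Let K be a field of characteristic 0 and S = K[x,y,z]. Let (A,m) be the multiarrangement in V = K^3 consisting of the five hyperplanes ker(x), ker(y), ker(x−y), ker(x−z), ker(y−z), each with multiplicity 2 (so Q̃ = x^2 y^2 (x−y)^2 (x−z)^2 (y−z)^2). Then (A,m) is not free; that is, D^1(A,m) is not a free S-module. -/
/-!
Write `S = K[x, y, z]`. A derivation `θ` is determined by `f = θ x`, `g = θ y`, `h = θ z`. A minimal
generating set of `D1 A` has four elements: `φ₁` of degree `3`, two derivations `φ₂`, `φ₃` of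
degree `4` (written out in the proof of the theorem), and `φ₄ = (x - z)² (y - z)² ∂_z`. Since `D1 A`
has rank at most `3`, it cannot be free.

To see that four generators are needed, it is enough to have a map `L : D1 A → K⁴` that is
semilinear along `constantCoeff` (that is, an `S`-linear map to `(S/𝔪)⁴`, with `𝔪` the ideal of the
origin) and sends the `φᵢ` to a basis: if `D1 A` had a basis of at most three elements, then
the images of those elements would span `K⁴`.
The map `L` is given by combinations of Taylor coefficients of
`f, g, h` at the origin, of degree `3` for the first component and `4` for the others. Semilinearity
means that the corresponding functionals vanish on `𝔪 · D1 A`. This holds because the divisibility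
conditions force the part of degree at most `3` of `(f, g, h)` to be a scalar multiple of `φ₁`
(`low_order`), and because the degree-`4` combinations are chosen to kill `x φ₁`, `y φ₁`, `z φ₁`.
Taylor coefficients are handled as iterated partial derivatives at `0`, up to factorials.
-/

open MvPolynomial

noncomputable section

variable {K : Type*} [Field K] {ℓ : ℕ}

/-- The i-th coordinate functional x_i on K^l. -/
def coordFn (i : Fin ℓ) : Module.Dual K (Fin ℓ → K) := LinearMap.proj i

/-- The derivation module `D^1(𝒜,m) = {θ ∈ Der_K(S) : θ(α_H) ∈ α_H^{m(H)}S}`. -/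
def D1 (A : MultiArr K ℓ) :
    Submodule (MvPolynomial (Fin ℓ) K)
      (Derivation K (MvPolynomial (Fin ℓ) K) (MvPolynomial (Fin ℓ) K)) where
  carrier := {θ | ∀ φ ∈ A.duals, θ (formPoly φ) ∈ Ideal.span {formPoly φ ^ A.mult φ}}
  add_mem' := fun ha hb φ hφ => by
    simpa using add_mem (ha φ hφ) (hb φ hφ)
  zero_mem' := fun φ hφ => by simp
  smul_mem' := fun c θ hθ φ hφ => by
    simpa using Ideal.mul_mem_left _ c (hθ φ hφ)

set_option maxHeartbeats 1000000 in
/-- Taylor coefficients of order at most `3` for a triple satisfying the divisibility conditions of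
Ziegler's arrangement: those of order at most `2` needed later vanish, and those of order `3`
agree with the ones of a scalar multiple of
`x² (x - 3y) ∂_x + y² (y - 3x) ∂_y + (x² (x - 3y) - (x - z)² (x - 3y + 2z)) ∂_z`. -/
lemma low_order [CharZero K] {f g h : MvPolynomial (Fin 3) K}
    (hf : X 0 ^ 2 ∣ f) (hg : X 1 ^ 2 ∣ g) (hfg : (X 0 - X 1) ^ 2 ∣ f - g)
    (hfh : (X 0 - X 2) ^ 2 ∣ f - h) (hgh : (X 1 - X 2) ^ 2 ∣ g - h) :
    ((constantCoeff f = 0 ∧ constantCoeff (pderiv 0 f) = 0 ∧ constantCoeff (pderiv 1 f) = 0 ∧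
      constantCoeff (pderiv 2 f) = 0 ∧
      constantCoeff (pderiv 0 (pderiv 0 f)) = 0 ∧ constantCoeff (pderiv 0 (pderiv 1 f)) = 0 ∧
      constantCoeff (pderiv 0 (pderiv 2 f)) = 0 ∧ constantCoeff (pderiv 1 (pderiv 1 f)) = 0 ∧
      constantCoeff (pderiv 0 (pderiv 1 (pderiv 1 f))) = 0 ∧
      constantCoeff (pderiv 0 (pderiv 0 (pderiv 2 f))) = 0) ∧
     (constantCoeff g = 0 ∧ constantCoeff (pderiv 0 g) = 0 ∧ constantCoeff (pderiv 1 g) = 0 ∧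
      constantCoeff (pderiv 0 (pderiv 0 g)) = 0 ∧ constantCoeff (pderiv 0 (pderiv 1 g)) = 0 ∧
      constantCoeff (pderiv 1 (pderiv 1 g)) = 0 ∧
      constantCoeff (pderiv 0 (pderiv 0 (pderiv 1 g))) = 0) ∧
     (constantCoeff h = 0 ∧ constantCoeff (pderiv 2 h) = 0 ∧
      constantCoeff (pderiv 2 (pderiv 2 h)) = 0)) ∧
    (constantCoeff (pderiv 0 (pderiv 0 (pderiv 0 f)))
      + constantCoeff (pderiv 0 (pderiv 1 (pderiv 1 g))) = 0 ∧
     constantCoeff (pderiv 0 (pderiv 0 (pderiv 1 f)))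
      + constantCoeff (pderiv 1 (pderiv 1 (pderiv 1 g))) = 0 ∧
     constantCoeff (pderiv 2 (pderiv 2 (pderiv 2 h)))
      + 2 * constantCoeff (pderiv 0 (pderiv 0 (pderiv 0 f))) = 0) := by
  obtain ⟨a, rfl⟩ := hf
  obtain ⟨b, rfl⟩ := hg
  obtain ⟨c, hc⟩ := hfg
  obtain ⟨A, hA⟩ := hfh
  obtain ⟨B, hB⟩ := hgh
  have hh : h = X 0 ^ 2 * a - (X 0 - X 2) ^ 2 * A := by rw [← hA]; ring
  have hc2 : (X 0 - X 1) ^ 2 * c = (X 0 - X 2) ^ 2 * A - (X 1 - X 2) ^ 2 * B := by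
    rw [← hc, ← hA, ← hB]; ring
  subst hh
  clear hA hB
  have two (i j : Fin 3) {p q : MvPolynomial (Fin 3) K} (e : p = q) :
    constantCoeff (pderiv i (pderiv j p)) = constantCoeff (pderiv i (pderiv j q)) := by rw [e]
  have three (i j k : Fin 3) {p q : MvPolynomial (Fin 3) K} (e : p = q) :
    constantCoeff (pderiv i (pderiv j (pderiv k p))) =
      constantCoeff (pderiv i (pderiv j (pderiv k q))) := by rw [e]
  -- Comparing partial derivatives of `hc` and `hc2` at `0` gives a linear system for the constant
  -- and linear coefficients of the quotients `a, b, c, A, B`.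
  have e1 := two 0 1 hc
  have e2 := two 0 0 hc
  have e3 := two 1 1 hc
  have e4 := two 0 0 hc2
  have e5 := two 1 1 hc2
  have t1 := three 0 0 0 hc
  have t2 := three 0 0 1 hc
  have t3 := three 0 1 1 hc
  have t4 := three 1 1 1 hc
  have t5 := three 0 0 2 hc
  have t6 := three 0 1 2 hc
  have s1 := three 0 0 0 hc2
  have s2 := three 0 0 1 hc2
  have s3 := three 0 1 1 hc2
  have s4 := three 1 1 1 hc2
  have s5 := three 0 0 2 hc2
  have s6 := three 0 1 2 hc2
  have s7 := three 0 2 2 hc2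
  have s8 := three 1 1 2 hc2
  have s9 := three 1 2 2 hc2
  have s10 := three 2 2 2 hc2
  simp [Derivation.leibniz, pderiv_X, pow_two] at e1 e2 e3 e4 e5 t1 t2 t3 t4 t5 t6
  simp [Derivation.leibniz, pderiv_X, pow_two] at s1 s2 s3 s4 s5 s6 s7 s8 s9 s10 ⊢
  have a0 : constantCoeff a = 0 := by rw [e2, e1]
  have A0 : constantCoeff A = 0 := by rw [← e4, e1]
  have b0 : constantCoeff b = 0 := by grind
  have B0 : constantCoeff B = 0 := by grind
  have c2 : constantCoeff (pderiv 2 c) = 0 := by simpa using t6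
  clear two three hc hc2
  refine ⟨⟨⟨a0, by rw [t5, c2]⟩, b0, A0⟩, ?_, ?_, ?_⟩ <;> grind

/-- The map `D1 A → (S/𝔪)⁴` on the level of coefficient triples `(f, g, h)`, up to scaling each
component: the coefficient of `x³` in `f`, and combinations of degree-`4` coefficients killing the
multiples by `x, y, z` of the degree-`3` derivation. -/
def coeffMap (f g h : MvPolynomial (Fin 3) K) : Fin 4 → K :=
  ![constantCoeff (pderiv 0 (pderiv 0 (pderiv 0 f))),
    constantCoeff (pderiv 0 (pderiv 0 (pderiv 0 (pderiv 0 f))))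
      + 2 * constantCoeff (pderiv 0 (pderiv 0 (pderiv 1 (pderiv 1 g)))),
    2 * constantCoeff (pderiv 0 (pderiv 0 (pderiv 1 (pderiv 1 f))))
      + constantCoeff (pderiv 1 (pderiv 1 (pderiv 1 (pderiv 1 g)))),
    constantCoeff (pderiv 2 (pderiv 2 (pderiv 2 (pderiv 2 h))))
      + 8 * constantCoeff (pderiv 0 (pderiv 0 (pderiv 0 (pderiv 2 f))))]

/-- Leibniz expansion of the left side produces coefficients of order at most `3` of `f, g, h`, which
cancel by `low_order`. -/
lemma coeffMap_smul [CharZero K] (p : MvPolynomial (Fin 3) K) {f g h : MvPolynomial (Fin 3) K}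
    (hf : X 0 ^ 2 ∣ f) (hg : X 1 ^ 2 ∣ g) (hfg : (X 0 - X 1) ^ 2 ∣ f - g)
    (hfh : (X 0 - X 2) ^ 2 ∣ f - h) (hgh : (X 1 - X 2) ^ 2 ∣ g - h) :
    coeffMap (p * f) (p * g) (p * h) = constantCoeff p • coeffMap f g h := by
  obtain ⟨⟨⟨f1, f2, f3, f4, f5, f6, f7, f8, f9, f10⟩, ⟨g1, g2, g3, g4, g5, g6, g7⟩, h1, h2, h3⟩,
    r1, r2, r3⟩ := low_order hf hg hfg hfh hgh
  ext i
  fin_cases i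
  · simp [coeffMap, Derivation.leibniz, f1, f2, f5]
  · simp [coeffMap, Derivation.leibniz, f1, f2, f5, g1, g2, g3, g4, g5, g6, g7]
    linear_combination 4 * constantCoeff (pderiv 0 p) * r1
  · simp [coeffMap, Derivation.leibniz, f1, f2, f3, f5, f6, f8, f9, g1, g3, g6]
    linear_combination 4 * constantCoeff (pderiv 1 p) * r2
  · simp [coeffMap, Derivation.leibniz, f1, f2, f4, f5, f7, f10, h1, h2, h3]
    linear_combination 4 * constantCoeff (pderiv 2 p) * r3

lemma coeffMap_add (f g h f' g' h' : MvPolynomial (Fin 3) K) :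
    coeffMap (f + f') (g + g') (h + h') = coeffMap f g h + coeffMap f' g' h' := by
  ext i
  fin_cases i <;> simp [coeffMap] <;> ring

/-- For Ziegler's arrangement, `D1 A` consists of the derivations `θ` whose values on `x, y, z`
satisfy the five divisibility conditions. -/
lemma mem_D1_iff (A : MultiArr K 3)
    (hduals : ∀ φ : Module.Dual K (Fin 3 → K), φ ∈ A.duals ↔
      (φ = coordFn 0 ∨ φ = coordFn 1 ∨
       φ = coordFn 0 - coordFn 1 ∨
       φ = coordFn 0 - coordFn 2 ∨
       φ = coordFn 1 - coordFn 2))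
    (hmult : ∀ φ ∈ A.duals, A.mult φ = 2)
    (θ : Derivation K (MvPolynomial (Fin 3) K) (MvPolynomial (Fin 3) K)) :
    θ ∈ D1 A ↔ X 0 ^ 2 ∣ θ (X 0) ∧ X 1 ^ 2 ∣ θ (X 1) ∧
      (X 0 - X 1) ^ 2 ∣ θ (X 0) - θ (X 1) ∧ (X 0 - X 2) ^ 2 ∣ θ (X 0) - θ (X 2) ∧
      (X 1 - X 2) ^ 2 ∣ θ (X 1) - θ (X 2) := by
  have hform (i : Fin 3) : formPoly (coordFn i : Module.Dual K (Fin 3 → K)) = X i := by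
    simp only [formPoly, coordFn, LinearMap.proj_apply, Pi.single_apply]
    simp
  have hsub (φ ψ : Module.Dual K (Fin 3 → K)) :
      formPoly (φ - ψ) = formPoly φ - formPoly ψ := by
    simp [formPoly, sub_mul, Finset.sum_sub_distrib]
  have key : θ ∈ D1 A ↔ ∀ φ ∈ A.duals, formPoly φ ^ 2 ∣ θ (formPoly φ) := by
    refine forall₂_congr fun φ hφ => ?_
    rw [Ideal.mem_span_singleton, hmult φ hφ]
  rw [key]
  simp only [hduals, forall_eq_or_imp, forall_eq, hsub, hform, map_sub]

/-- The map `D1 A → (S/𝔪)⁴` sending `θ` to `coeffMap (θ x) (θ y) (θ z)`; semilinearity along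
`constantCoeff` is linearity over `S`. The hypothesis `hD` is one half of `mem_D1_iff`. -/
def coeffHom [CharZero K] (A : MultiArr K 3)
    (hD : ∀ θ ∈ D1 A, X 0 ^ 2 ∣ θ (X 0) ∧ X 1 ^ 2 ∣ θ (X 1) ∧
      (X 0 - X 1) ^ 2 ∣ θ (X 0) - θ (X 1) ∧ (X 0 - X 2) ^ 2 ∣ θ (X 0) - θ (X 2) ∧
      (X 1 - X 2) ^ 2 ∣ θ (X 1) - θ (X 2)) :
    D1 A →ₛₗ[(constantCoeff : MvPolynomial (Fin 3) K →+* K)] (Fin 4 → K) where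
  toFun θ := coeffMap (θ.1 (X 0)) (θ.1 (X 1)) (θ.1 (X 2))
  map_add' θ η := by simp [coeffMap_add]
  map_smul' p θ := by
    obtain ⟨h1, h2, h3, h4, h5⟩ := hD θ.1 θ.2
    simpa using coeffMap_smul p h1 h2 h3 h4 h5

/-- A free submodule of `S³` has a basis of at most three elements, and a semilinear map to
`(S/𝔪)⁴` is determined up to `K`-span by its values on a basis. -/
lemma span_range_ne_top {M : Type*} [AddCommGroup M] [Module (MvPolynomial (Fin 3) K) M]
    [Module.Free (MvPolynomial (Fin 3) K) M]
    (ι : M →ₗ[MvPolynomial (Fin 3) K] (Fin 3 → MvPolynomial (Fin 3) K))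
    (hι : Function.Injective ι)
    (L : M →ₛₗ[(constantCoeff : MvPolynomial (Fin 3) K →+* K)] (Fin 4 → K)) :
    Submodule.span K (Set.range L) ≠ ⊤ := by
  intro htop
  have : Module.Finite (MvPolynomial (Fin 3) K) M := Module.Finite.of_injective ι hι
  let b := Module.Free.chooseBasis (MvPolynomial (Fin 3) K) M
  have hle := LinearMap.finrank_le_finrank_of_injective hι
  rw [Module.finrank_eq_card_chooseBasisIndex, Module.finrank_fin_fun] at hle
  have hspan : Submodule.span K (Set.range fun i => L (b i)) = ⊤ := by
    rw [eq_top_iff, ← htop, Submodule.span_le]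
    rintro _ ⟨m, rfl⟩
    rw [← b.sum_repr m, map_sum]
    refine Submodule.sum_mem _ fun i _ => ?_
    rw [map_smulₛₗ]
    exact Submodule.smul_mem _ _ (Submodule.subset_span ⟨i, rfl⟩)
  have h4 := finrank_range_le_card (R := K) (fun i => L (b i))
  rw [Set.finrank, hspan, finrank_top, Module.finrank_fin_fun] at h4
  omega

/-- **Ziegler's example.** Over a field of characteristic `0`, the
multiarrangement in `K^3` defined by `Q̃ = x²y²(x−y)²(x−z)²(y−z)²` (the five hyperplanes
`ker x`, `ker y`, `ker (x−y)`, `ker (x−z)`, `ker (y−z)`, each with multiplicity `2`)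
is not free. -/
theorem ziegler_example_not_free [CharZero K] (A : MultiArr K 3)
    (hduals : ∀ φ : Module.Dual K (Fin 3 → K), φ ∈ A.duals ↔
      (φ = coordFn 0 ∨ φ = coordFn 1 ∨
       φ = coordFn 0 - coordFn 1 ∨
       φ = coordFn 0 - coordFn 2 ∨
       φ = coordFn 1 - coordFn 2))
    (hmult : ∀ φ ∈ A.duals, A.mult φ = 2) :
    ¬ Module.Free (MvPolynomial (Fin 3) K) ↥(D1 A) := by
  intro hfree
  have hD := mem_D1_iff A hduals hmult
  let ι : D1 A →ₗ[MvPolynomial (Fin 3) K] (Fin 3 → MvPolynomial (Fin 3) K) :=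
    { toFun := fun θ i => θ.1 (X i)
      map_add' := fun _ _ => rfl
      map_smul' := fun _ _ => rfl }
  have hι : Function.Injective ι := fun θ η h =>
    Subtype.ext (MvPolynomial.derivation_ext fun i => congrFun h i)
  let L := coeffHom A fun θ hθ => (hD θ).1 hθ
  apply span_range_ne_top (K := K) (M := D1 A) ι hι L
  have mem (f g h : MvPolynomial (Fin 3) K)
      (hf : X 0 ^ 2 ∣ f) (hg : X 1 ^ 2 ∣ g) (hfg : (X 0 - X 1) ^ 2 ∣ f - g)
      (hfh : (X 0 - X 2) ^ 2 ∣ f - h) (hgh : (X 1 - X 2) ^ 2 ∣ g - h) :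
      coeffMap f g h ∈ Submodule.span K (Set.range L) := by
    refine Submodule.subset_span ⟨⟨mkDerivation K ![f, g, h], (hD _).2 ?_⟩, ?_⟩
    · simpa [mkDerivation_X] using ⟨hf, hg, hfg, hfh, hgh⟩
    · simp [L, coeffHom, mkDerivation_X]
  -- The generator of degree `3`.
  have m1 := mem (X 0 ^ 2 * (X 0 - 3 * X 1)) (X 1 ^ 2 * (X 1 - 3 * X 0))
    (X 0 ^ 2 * (X 0 - 3 * X 1) - (X 0 - X 2) ^ 2 * (X 0 - 3 * X 1 + 2 * X 2))
    ⟨_, rfl⟩ ⟨_, rfl⟩ ⟨X 0 - X 1, by ring⟩ ⟨X 0 - 3 * X 1 + 2 * X 2, by ring⟩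
    ⟨X 1 - 3 * X 0 + 2 * X 2, by ring⟩
  -- With `f = x² a`, `g = y² b`, `f - g = (x - y)² c`, the pairs `(f, g)` form a free module on the
  -- pairs with `c = x` and `c = y`, and `h` exists exactly when `c ∈ (x - z, y - z)`. The next two
  -- derivations have `c = x (x - z)` and `c = y (y - z)`.
  have m2 := mem (X 0 ^ 2 * ((X 0 - X 2) * (X 0 - 2 * X 1))) (X 1 ^ 2 * (- X 0 * (X 0 - X 2)))
    ((X 0 - X 2) * X 0 * ((X 1 - X 2) ^ 2 - X 1 ^ 2))
    ⟨_, rfl⟩ ⟨_, rfl⟩ ⟨X 0 * (X 0 - X 2), by ring⟩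
    ⟨((X 0 - X 2) - 2 * (X 1 - X 2)) * X 0, by ring⟩ ⟨-(X 0 - X 2) * X 0, by ring⟩
  have m3 := mem (X 0 ^ 2 * (X 1 * (X 1 - X 2))) (X 1 ^ 2 * ((X 1 - X 2) * (2 * X 0 - X 1)))
    ((X 1 - X 2) * X 1 * (X 0 ^ 2 - (X 0 - X 2) ^ 2))
    ⟨_, rfl⟩ ⟨_, rfl⟩ ⟨X 1 * (X 1 - X 2), by ring⟩
    ⟨(X 1 - X 2) * X 1, by ring⟩ ⟨(2 * (X 0 - X 2) - (X 1 - X 2)) * X 1, by ring⟩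
  have m4 := mem 0 0 ((X 0 - X 2) ^ 2 * (X 1 - X 2) ^ 2)
    ⟨0, by ring⟩ ⟨0, by ring⟩ ⟨0, by ring⟩
    ⟨-(X 1 - X 2) ^ 2, by ring⟩ ⟨-(X 0 - X 2) ^ 2, by ring⟩
  generalize Submodule.span K (Set.range L) = W at *
  have d2 (i : Fin 3) : pderiv i (2 : MvPolynomial (Fin 3) K) = 0 := by
    simpa using (pderiv i : Derivation K (MvPolynomial (Fin 3) K) _).map_natCast 2
  have d3 (i : Fin 3) : pderiv i (3 : MvPolynomial (Fin 3) K) = 0 := by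
    simpa using (pderiv i : Derivation K (MvPolynomial (Fin 3) K) _).map_natCast 3
  simp [coeffMap, Derivation.leibniz, pderiv_X, pow_two, d2, d3] at m1 m2 m3 m4
  norm_num at m1 m2 m3 m4
  rw [eq_top_iff]
  intro v _
  have hv : v = (v 0 / 6) • ![6, 0, 0, 0] + (v 1 / 16) • ![0, 16, 0, -48] +
      (-v 2 / 16) • ![0, 0, -16, 0] + ((v 3 + 3 * v 1) / 24) • ![0, 0, 0, (24 : K)] := by
    ext i
    fin_cases i <;> simp; ring
  rw [hv]
  exact W.add_mem (W.add_mem (W.add_mem (W.smul_mem _ m1) (W.smul_mem _ m2))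
    (W.smul_mem _ m3)) (W.smul_mem _ m4)
end
end
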